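/- arXiv:1512.00231 — 2 statements merged into one kernel-verified Lean document; each statement's English description precedes it below -/
import Mathlib

section
/- Let σ be a real-valued function on the family of convex bodies of ℝ^N together with the empty set, with σ(∅) = 0, such that: σ(K ∪ L) + σ(K ∩ L) = σ(K) + σ(L) whenever K, L and K ∪ L are convex bodies; σ(T(K)) = σ(K) for every rigid motion (isometry) T of ℝ^N; σ(K) = 0 whenever K is a convex body of dimension strictly less than N; and σ(K_i) → σ(K) whenever K_i is a decreasing sequence of convex bodies converging to a convex body K in the Hausdorff metric. Then there exists a constant c ∈ ℝ such that σ(K) = c · vol_N(K) for every convex body K, where vol_N is the N-dimensional Lebesgue measure. -/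
open Filter Topology MeasureTheory

noncomputable section

/-- A convex body in `ℝ^N` is a nonempty compact convex subset. -/
def IsConvexBody {N : ℕ} (K : Set (EuclideanSpace ℝ (Fin N))) : Prop :=
  K.Nonempty ∧ IsCompact K ∧ Convex ℝ K

/-!
Subtracting a multiple of the volume, we may assume that `σ` vanishes on unit cubes, and must show
that `σ = 0`. By induction on the dimension, `σ` vanishes on every Minkowski sum of convex bodies
lying in complementary orthogonal subspaces of positive dimension. An orthoscheme dilated by `r + s`
is cut into its dilates by `r` and by `s` and into such sums, so `σ` is homogeneous of degree one on
orthoschemes, and hence everywhere, because orthoschemes dissect all convex polytopes. The same cut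
with a further convex body `L` added to every piece, combined with homogeneity, gives
`σ (S + L) = σ S + σ L` for path simplices `S`.

This Minkowski additivity and the value of `σ` survive adding zonotopes, which have value zero, and
averaging over reflections. Repeated averaging rounds `S` plus a zonotope to a ball, so `σ S` is the
value of `σ` on a ball. A zonotope rounds to a ball as well, so by homogeneity all balls have value
zero. Hence `σ` vanishes on orthoschemes, and therefore everywhere.
-/

namespace SimpleValuation

open Module Set
open scoped Pointwise InnerProductSpace

section CompactConvex

/-- Convex bodies, with the empty set allowed so that the class is closed under intersection. -/
def IsCompactConvex {W : Type*} [AddCommGroup W] [Module ℝ W] [TopologicalSpace W]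
    (K : Set W) : Prop :=
  IsCompact K ∧ Convex ℝ K

namespace IsCompactConvex

section Module

variable {W W' : Type*} [AddCommGroup W] [Module ℝ W] [TopologicalSpace W]
  [AddCommGroup W'] [Module ℝ W'] [TopologicalSpace W'] {K L : Set W}

lemma singleton (v : W) : IsCompactConvex ({v} : Set W) :=
  ⟨isCompact_singleton, convex_singleton v⟩

lemma add [ContinuousAdd W] (hK : IsCompactConvex K) (hL : IsCompactConvex L) :
    IsCompactConvex (K + L) :=
  ⟨hK.1.add hL.1, hK.2.add hL.2⟩

lemma sum [ContinuousAdd W] {ι : Type*} {K : ι → Set W} (s : Finset ι)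
    (hK : ∀ i ∈ s, IsCompactConvex (K i)) : IsCompactConvex (∑ i ∈ s, K i) :=
  Finset.sum_induction K IsCompactConvex (fun _ _ => add) (singleton 0) hK

lemma smul [ContinuousConstSMul ℝ W] (hK : IsCompactConvex K) (t : ℝ) :
    IsCompactConvex (t • K) :=
  ⟨hK.1.smul t, hK.2.smul t⟩

lemma inter (hK : IsCompactConvex K) (hL : IsClosed L) (hL' : Convex ℝ L) :
    IsCompactConvex (K ∩ L) :=
  ⟨hK.1.inter_right hL, hK.2.inter hL'⟩

lemma image (hK : IsCompactConvex K) (f : W →L[ℝ] W') : IsCompactConvex (f '' K) :=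
  ⟨hK.1.image f.continuous, hK.2.linear_image f.toLinearMap⟩

lemma inter_le (hK : IsCompactConvex K) (g : W →L[ℝ] ℝ) (c : ℝ) :
    IsCompactConvex (K ∩ {x | g x ≤ c}) :=
  hK.inter (isClosed_le g.continuous continuous_const) (convex_halfSpace_le g.isLinear c)

lemma inter_ge (hK : IsCompactConvex K) (g : W →L[ℝ] ℝ) (c : ℝ) :
    IsCompactConvex (K ∩ {x | c ≤ g x}) :=
  hK.inter (isClosed_le continuous_const g.continuous) (convex_halfSpace_ge g.isLinear c)

lemma inter_eq (hK : IsCompactConvex K) (g : W →L[ℝ] ℝ) (c : ℝ) :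
    IsCompactConvex (K ∩ {x | g x = c}) :=
  hK.inter (isClosed_eq g.continuous continuous_const) (convex_hyperplane g.isLinear c)

end Module

variable {V : Type*} [NormedAddCommGroup V] [InnerProductSpace ℝ V] {K : Set V}

lemma segment (v w : V) : IsCompactConvex (segment ℝ v w) := by
  refine ⟨?_, convex_segment v w⟩
  rw [segment_eq_image_lineMap]
  exact isCompact_Icc.image AffineMap.lineMap_continuous

lemma closedBall [FiniteDimensional ℝ V] (r : ℝ) : IsCompactConvex (Metric.closedBall (0 : V) r) :=
  have := FiniteDimensional.proper_real V
  ⟨isCompact_closedBall _ _, convex_closedBall _ _⟩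

lemma preimage_coe {E : Submodule ℝ V} [FiniteDimensional ℝ E] (hK : IsCompactConvex K) :
    IsCompactConvex ((↑) ⁻¹' K : Set E) :=
  ⟨E.closed_of_finiteDimensional.isClosedEmbedding_subtypeVal.isCompact_preimage hK.1,
    hK.2.linear_preimage E.subtype⟩

lemma image_coe {E : Submodule ℝ V} {A : Set E} (hA : IsCompactConvex A) :
    IsCompactConvex ((↑) '' A : Set V) :=
  hA.image E.subtypeL

end IsCompactConvex

end CompactConvex

section Valuation

variable {V : Type*} [NormedAddCommGroup V] [InnerProductSpace ℝ V]

/-- Continuity of a set function along decreasing sequences of compact convex sets. -/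
def IsContinuousFromAbove (φ : Set V → ℝ) : Prop :=
  ∀ K : ℕ → Set V, (∀ i, IsCompactConvex (K i)) → Antitone K →
    Tendsto (fun i => φ (K i)) atTop (𝓝 (φ (⋂ i, K i)))

/-- A set function that vanishes on the empty set and on sets contained in a hyperplane, and is
additive under hyperplane cuts. This is the only part of the valuation property needed for
dissection arguments, and it passes to cones over a fixed apex. -/
structure IsDissectionAdditive (φ : Set V → ℝ) : Prop where
  empty : φ ∅ = 0
  flat : ∀ (u : V) (c : ℝ) (K : Set V), IsCompactConvex K → u ≠ 0 → (∀ x ∈ K, ⟪u, x⟫_ℝ = c) →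
    φ K = 0
  cut : ∀ (u : V) (c : ℝ) (K : Set V), IsCompactConvex K → u ≠ 0 →
    φ K = φ (K ∩ {x | ⟪u, x⟫_ℝ ≤ c}) + φ (K ∩ {x | c ≤ ⟪u, x⟫_ℝ})

/-- A simple valuation on compact convex sets, continuous from above and invariant under
translations and hyperplane reflections. Reflections generate the orthogonal group and, unlike
general isometries, extend from a subspace to the whole space by the same formula. -/
structure IsInvariantSimpleValuation (σ : Set V → ℝ) : Prop where
  empty : σ ∅ = 0
  union_add_inter : ∀ K L : Set V, IsCompactConvex K → IsCompactConvex L → Convex ℝ (K ∪ L) →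
    σ (K ∪ L) + σ (K ∩ L) = σ K + σ L
  translate : ∀ (v : V) (K : Set V), IsCompactConvex K → σ ({v} + K) = σ K
  reflect : ∀ (u : V) (K : Set V), IsCompactConvex K → σ ((ℝ ∙ u)ᗮ.reflection '' K) = σ K
  flat : ∀ (u : V) (c : ℝ) (K : Set V), IsCompactConvex K → u ≠ 0 → (∀ x ∈ K, ⟪u, x⟫_ℝ = c) →
    σ K = 0
  continuousFromAbove : IsContinuousFromAbove σ

/-- The two cut pieces meet exactly over the cut: a point with preimages on both sides of the
hyperplane has, by convexity, a preimage on the hyperplane. -/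
lemma image_inter_ge_add_inter_image_inter_le_add {W : Type*} [AddCommGroup W] [Module ℝ W]
    [TopologicalSpace W] (f : W →L[ℝ] V) (g : W →L[ℝ] ℝ) (c : ℝ) {U : Set W} (hU : Convex ℝ U)
    {L : Set V} (hL : Convex ℝ L) :
    (f '' (U ∩ {x | c ≤ g x}) + L) ∩ (f '' (U ∩ {x | g x ≤ c}) + L) =
      f '' (U ∩ {x | g x = c}) + L := by
  apply Subset.antisymm
  · rintro z ⟨⟨_, ⟨a, ⟨ha, hca⟩, rfl⟩, l, hl, rfl⟩, ⟨_, ⟨b, ⟨hb, hbc⟩, rfl⟩, l', hl', hz⟩⟩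
    have hz : f b + l' = f a + l := hz
    obtain ⟨p, q, hp, hq, hpq, hc⟩ : c ∈ segment ℝ (g b) (g a) := by
      rw [segment_eq_Icc (le_trans hbc hca)]
      exact ⟨hbc, hca⟩
    refine ⟨f (p • b + q • a), ⟨_, ⟨hU hb ha hp hq hpq, by simpa using hc⟩, rfl⟩,
      p • l' + q • l, hL hl' hl hp hq hpq, ?_⟩
    calc f (p • b + q • a) + (p • l' + q • l)
        = p • (f b + l') + q • (f a + l) := by simp only [map_add, map_smul, smul_add]; abel
      _ = f a + l := by rw [hz, Convex.combo_self hpq]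
  · refine subset_inter ?_ ?_ <;> refine add_subset_add_right (image_mono ?_)
    · exact fun x hx => ⟨hx.1, hx.2.ge⟩
    · exact fun x hx => ⟨hx.1, hx.2.le⟩

namespace IsInvariantSimpleValuation

variable {σ : Set V → ℝ}

lemma image_add_cut (hσ : IsInvariantSimpleValuation σ) {W : Type*} [AddCommGroup W] [Module ℝ W]
    [TopologicalSpace W] (f : W →L[ℝ] V) (g : W →L[ℝ] ℝ) (c : ℝ) {U : Set W}
    (hU : IsCompactConvex U) {L : Set V} (hL : IsCompactConvex L) :
    σ (f '' U + L) = σ (f '' (U ∩ {x | c ≤ g x}) + L) +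
      (σ (f '' (U ∩ {x | g x ≤ c}) + L) - σ (f '' (U ∩ {x | g x = c}) + L)) := by
  have hunion : (f '' (U ∩ {x | c ≤ g x}) + L) ∪ (f '' (U ∩ {x | g x ≤ c}) + L) = f '' U + L := by
    rw [← union_add, ← image_union, ← inter_union_distrib_left]
    have : {x | c ≤ g x} ∪ {x | g x ≤ c} = univ := eq_univ_of_forall fun x => le_total c (g x)
    rw [this, inter_univ]
  have hval := hσ.union_add_inter _ _ (((hU.inter_ge g c).image f).add hL)
    (((hU.inter_le g c).image f).add hL) (hunion ▸ ((hU.image f).add hL).2)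
  rw [hunion, image_inter_ge_add_inter_image_inter_le_add f g c hU.2 hL.2] at hval
  linarith

lemma isDissectionAdditive (hσ : IsInvariantSimpleValuation σ) : IsDissectionAdditive σ where
  empty := hσ.empty
  flat := hσ.flat
  cut u c K hK hu := by
    have hcut := hσ.image_add_cut (.id ℝ V) (innerSL ℝ u) c hK (.singleton 0)
    have hface : σ (K ∩ {x | ⟪u, x⟫_ℝ = c}) = 0 :=
      hσ.flat u c _ (hK.inter_eq (innerSL ℝ u) c) hu fun x hx => hx.2
    simp only [ContinuousLinearMap.coe_id', image_id, singleton_zero, add_zero,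
      innerSL_apply_apply, hface, sub_zero] at hcut
    rw [hcut, add_comm]

end IsInvariantSimpleValuation

lemma smul_subset_smul_of_zero_mem {W : Type*} [AddCommGroup W] [Module ℝ W] {K : Set W}
    (hK : Convex ℝ K) (h0 : (0 : W) ∈ K) {a b : ℝ} (ha : 0 ≤ a) (hab : a ≤ b) :
    a • K ⊆ b • K := by
  rcases (ha.trans hab).eq_or_lt with rfl | hb
  · rw [le_antisymm hab ha]
  rintro _ ⟨x, hx, rfl⟩
  have hmem := hK.smul_mem_of_zero_mem h0 hx ⟨by positivity, div_le_one_of_le₀ hab hb.le⟩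
  refine ⟨(a / b) • x, hmem, ?_⟩
  simp only [smul_smul, mul_div_cancel₀ a hb.ne']

namespace IsContinuousFromAbove

variable {φ : Set V → ℝ}

lemma tendsto_of_subset_add_closedBall (hφ : IsContinuousFromAbove φ) {K : ℕ → Set V} {L : Set V}
    {ε : ℕ → ℝ} (hK : ∀ i, IsCompactConvex (K i)) (hanti : Antitone K) (hL : IsClosed L)
    (hsub : ∀ i, L ⊆ K i) (hε : Tendsto ε atTop (𝓝 0))
    (hclose : ∀ i, K i ⊆ L + Metric.closedBall 0 (ε i)) :
    Tendsto (fun i => φ (K i)) atTop (𝓝 (φ L)) := by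
  have hinter : ⋂ i, K i = L := by
    refine Subset.antisymm (fun x hx => ?_) (subset_iInter hsub)
    rw [← hL.closure_eq, Metric.mem_closure_iff]
    intro δ hδ
    obtain ⟨i, hi⟩ := (hε.eventually (gt_mem_nhds hδ)).exists
    obtain ⟨y, hy, z, hz, rfl⟩ := hclose i (mem_iInter.1 hx i)
    exact ⟨y, hy, by simpa using (mem_closedBall_zero_iff.1 hz).trans_lt hi⟩
  exact hinter ▸ hφ K hK hanti

lemma tendsto_smul_add (hφ : IsContinuousFromAbove φ) {K L : Set V} (hK : IsCompactConvex K)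
    (hL : IsCompactConvex L) (h0 : (0 : V) ∈ K) {t : ℝ} (ht : 0 ≤ t) {u : ℕ → ℝ}
    (hu : Antitone u) (hut : Tendsto u atTop (𝓝 t)) :
    Tendsto (fun i => φ (u i • K + L)) atTop (𝓝 (φ (t • K + L))) := by
  have hle : ∀ i, t ≤ u i := fun i => hu.le_of_tendsto hut i
  obtain ⟨C, hC⟩ := hK.1.isBounded.exists_norm_le
  refine hφ.tendsto_of_subset_add_closedBall (ε := fun i => (u i - t) * C)
    (fun i => (hK.smul _).add hL) (fun i j hij => add_subset_add_right
      (smul_subset_smul_of_zero_mem hK.2 h0 (ht.trans (hle j)) (hu hij)))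
    ((hK.smul t).add hL).1.isClosed
    (fun i => add_subset_add_right (smul_subset_smul_of_zero_mem hK.2 h0 ht (hle i)))
    (by simpa using (hut.sub_const t).mul_const C) ?_
  rintro i _ ⟨_, ⟨x, hx, rfl⟩, l, hl, rfl⟩
  refine ⟨t • x + l, ⟨t • x, ⟨x, hx, rfl⟩, l, hl, rfl⟩, (u i - t) • x, ?_, ?_⟩
  · rw [mem_closedBall_zero_iff, norm_smul, Real.norm_of_nonneg (sub_nonneg.2 (hle i))]
    exact mul_le_mul_of_nonneg_left (hC x hx) (sub_nonneg.2 (hle i))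
  · simp only [sub_smul]; abel

end IsContinuousFromAbove

end Valuation

lemma eq_mul_of_additive_of_tendsto {f : ℝ → ℝ}
    (hadd : ∀ s t, 0 ≤ s → 0 ≤ t → f (s + t) = f s + f t)
    (hcont : ∀ t, 0 ≤ t → ∀ u : ℕ → ℝ, Antitone u → Tendsto u atTop (𝓝 t) →
      Tendsto (fun i => f (u i)) atTop (𝓝 (f t))) {t : ℝ} (ht : 0 ≤ t) : f t = t * f 1 := by
  have h_nat_mul (n : ℕ) {s : ℝ} (hs : 0 ≤ s) : f (n * s) = n * f s := by
    induction n with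
    | zero => simpa using hadd 0 0 le_rfl le_rfl
    | succ k ih => rw [Nat.cast_succ, add_one_mul, hadd _ _ (by positivity) hs, ih, add_one_mul]
  have h_rat {q : ℚ} (hq : 0 ≤ q) : f q = q * f 1 := by
    have hnum : ((q.num.toNat : ℕ) : ℝ) = q.num := by
      exact_mod_cast Int.toNat_of_nonneg (Rat.num_nonneg.2 hq)
    have hden : (q.den : ℝ) * q = q.num := by exact_mod_cast Rat.den_mul_eq_num q
    have hq' : (0 : ℝ) ≤ q := by exact_mod_cast hq
    have hden_ne : (q.den : ℝ) ≠ 0 := by exact_mod_cast q.den_ne_zero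
    apply mul_left_cancel₀ hden_ne
    rw [← h_nat_mul _ hq', hden, ← hnum, ← mul_one (q.num.toNat : ℝ), h_nat_mul _ zero_le_one,
      hnum, ← mul_assoc, hden]
  obtain ⟨u, hu_anti, hu_gt, hu_lim⟩ := Real.exists_seq_rat_strictAnti_tendsto t
  have hu_nonneg (i : ℕ) : 0 ≤ u i := by exact_mod_cast ht.trans (hu_gt i).le
  have hlim := hcont t ht (fun i => u i) (Rat.cast_mono.comp_antitone hu_anti.antitone) hu_lim
  simp only [h_rat (hu_nonneg _)] at hlim
  exact tendsto_nhds_unique hlim (hu_lim.mul_const _)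

section PathSimplex

/-- Descending sequences with values in `[0, m]`, the parameter domain of path simplices. The
sequences are infinite so that dropping the first terms stays within the same type. -/
def descendingSeq (m : ℝ) : Set (ℕ → ℝ) := {x | Antitone x ∧ ∀ j, x j ∈ Icc 0 m}

lemma isCompactConvex_descendingSeq (m : ℝ) : IsCompactConvex (descendingSeq m) := by
  constructor
  · have heq : descendingSeq m = (univ.pi fun _ => Icc 0 m) ∩ ⋂ i, {x | x (i + 1) ≤ x i} := by
      ext x
      simp only [descendingSeq, mem_ofPred_eq, mem_inter_iff, Set.mem_pi, mem_univ,
        true_implies, mem_iInter, and_comm (a := Antitone x)]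
      exact and_congr_right fun _ => ⟨fun h i => h i.le_succ, antitone_nat_of_succ_le⟩
    rw [heq]
    exact (isCompact_univ_pi fun _ => isCompact_Icc).inter_right
      (isClosed_iInter fun i => isClosed_le (continuous_apply _) (continuous_apply _))
  · rintro x ⟨hx, hxm⟩ y ⟨hy, hym⟩ a b ha hb hab
    refine ⟨fun i j hij => ?_, fun j => convex_Icc 0 m (hxm j) (hym j) ha hb hab⟩
    exact add_le_add (mul_le_mul_of_nonneg_left (hx hij) ha) (mul_le_mul_of_nonneg_left (hy hij) hb)

lemma const_mem_descendingSeq {c m : ℝ} (hc : 0 ≤ c) (hcm : c ≤ m) :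
    (fun _ => c) ∈ descendingSeq m :=
  ⟨antitone_const, fun _ => ⟨hc, hcm⟩⟩

lemma smul_mem_descendingSeq {c m : ℝ} (hc : 0 ≤ c) {x : ℕ → ℝ} (hx : x ∈ descendingSeq m) :
    c • x ∈ descendingSeq (c * m) :=
  ⟨fun _ _ hij => mul_le_mul_of_nonneg_left (hx.1 hij) hc, fun j =>
    ⟨mul_nonneg hc (hx.2 j).1, mul_le_mul_of_nonneg_left (hx.2 j).2 hc⟩⟩

lemma descendingSeq_eq_smul {m : ℝ} (hm : 0 ≤ m) : descendingSeq m = m • descendingSeq 1 := by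
  apply Subset.antisymm
  · rintro x ⟨hx, hxm⟩
    refine ⟨m⁻¹ • x, ⟨fun _ _ hij => mul_le_mul_of_nonneg_left (hx hij) (inv_nonneg.2 hm), fun j =>
      ⟨mul_nonneg (inv_nonneg.2 hm) (hxm j).1, inv_mul_le_one_of_le₀ (hxm j).2 hm⟩⟩, ?_⟩
    rcases hm.eq_or_lt with rfl | hm
    · funext j
      simpa using le_antisymm (hxm j).1 (hxm j).2
    · exact smul_inv_smul₀ hm.ne' x
  · rintro _ ⟨x, hx, rfl⟩
    simpa using smul_mem_descendingSeq hm hx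

/-- The sequences of `descendingSeq m` whose first `i` terms are at least `s`. -/
def descendingSeqGE (m s : ℝ) (i : ℕ) : Set (ℕ → ℝ) :=
  descendingSeq m ∩ {x | ∀ j < i, s ≤ x j}

lemma descendingSeqGE_zero (m s : ℝ) : descendingSeqGE m s 0 = descendingSeq m := by
  simp [descendingSeqGE]

lemma descendingSeqGE_succ (m s : ℝ) (i : ℕ) :
    descendingSeqGE m s (i + 1) = descendingSeqGE m s i ∩ {x | s ≤ x i} := by
  ext x
  simp only [descendingSeqGE, mem_inter_iff, mem_ofPred_eq, Nat.forall_lt_succ_right, and_assoc]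

lemma isCompactConvex_descendingSeqGE (m s : ℝ) (i : ℕ) :
    IsCompactConvex (descendingSeqGE m s i) := by
  induction i with
  | zero => exact descendingSeqGE_zero m s ▸ isCompactConvex_descendingSeq m
  | succ i ih =>
    rw [descendingSeqGE_succ]
    exact ih.inter_ge (.proj i) s

lemma max_sub_mem_descendingSeq {r s : ℝ} (hr : 0 ≤ r) {x : ℕ → ℝ}
    (hx : x ∈ descendingSeq (r + s)) : (fun j => max (x j - s) 0) ∈ descendingSeq r :=
  ⟨fun _ _ hij => max_le_max_right 0 (sub_le_sub_right (hx.1 hij) s), fun j =>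
    ⟨le_max_right _ _, max_le (sub_le_iff_le_add.2 (hx.2 j).2) hr⟩⟩

lemma add_const_mem_descendingSeqGE {r s : ℝ} (hs : 0 ≤ s) {y : ℕ → ℝ} (hy : y ∈ descendingSeq r)
    (i : ℕ) : (fun j => y j + s) ∈ descendingSeqGE (r + s) s i :=
  ⟨⟨fun _ _ hij => add_le_add_left (hy.1 hij) s, fun j =>
    ⟨add_nonneg (hy.2 j).1 hs, add_le_add_left (hy.2 j).2 s⟩⟩,
    fun j _ => le_add_of_nonneg_left (hy.2 j).1⟩

lemma glue_mem_descendingSeqGE {r s : ℝ} (hr : 0 ≤ r) {y z : ℕ → ℝ}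
    (hy : y ∈ descendingSeq r) (hz : z ∈ descendingSeq s) (i : ℕ) :
    (fun j => if j < i then y j + s else z (j - i)) ∈ descendingSeqGE (r + s) s i := by
  refine ⟨⟨fun a b hab => ?_, fun j => ?_⟩, fun j hj => ?_⟩
  · dsimp only
    split_ifs with hb ha ha
    · exact add_le_add_left (hy.1 hab) s
    · omega
    · exact (hz.2 _).2.trans (le_add_of_nonneg_left (hy.2 a).1)
    · exact hz.1 (Nat.sub_le_sub_right hab i)
  · dsimp only
    split_ifs
    · exact ⟨add_nonneg (hy.2 j).1 ((hz.2 0).1.trans (hz.2 0).2), add_le_add_left (hy.2 j).2 s⟩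
    · exact ⟨(hz.2 _).1, (hz.2 _).2.trans (le_add_of_nonneg_left hr)⟩
  · simpa only [if_pos hj] using le_add_of_nonneg_left (hy.2 j).1

lemma descendingSeqGE_inter_le (m s : ℝ) (i : ℕ) : descendingSeqGE m s i ∩ {x | x i ≤ s} =
    descendingSeqGE m s i ∩ {x | (fun j => x (i + j)) ∈ descendingSeq s} := by
  ext x
  simp only [mem_inter_iff, mem_ofPred_eq, and_congr_right_iff]
  rintro ⟨⟨hx, hxm⟩, -⟩
  exact ⟨fun h => ⟨fun a b hab => hx (by lia), fun j => ⟨(hxm _).1, (hx (by lia)).trans h⟩⟩,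
    fun h => (h.2 0).2⟩

lemma descendingSeqGE_inter_eq (m s : ℝ) (i : ℕ) : descendingSeqGE m s i ∩ {x | x i = s} =
    descendingSeqGE m s i ∩ {x | (fun j => x (i + j)) ∈ descendingSeq s ∩ {z | z 0 = s}} := by
  have hle := descendingSeqGE_inter_le m s i
  ext x
  have := Set.ext_iff.1 hle x
  simp only [mem_inter_iff, mem_ofPred_eq, add_zero] at this ⊢
  grind

variable {V : Type*} [NormedAddCommGroup V] [InnerProductSpace ℝ V] (w : ℕ → V) (d : ℕ)

/-- The linear map `x ↦ ∑ j < d, x j • w j` on sequences of coefficients. -/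
def pathMap : (ℕ → ℝ) →L[ℝ] V :=
  ∑ j ∈ Finset.range d, (ContinuousLinearMap.proj j : (ℕ → ℝ) →L[ℝ] ℝ).smulRight (w j)

lemma pathMap_apply (x : ℕ → ℝ) : pathMap w d x = ∑ j ∈ Finset.range d, x j • w j := by
  simp [pathMap]

lemma pathMap_eq_add_shift {i : ℕ} (hi : i ≤ d) (x : ℕ → ℝ) :
    pathMap w d x = pathMap w i x + pathMap (fun j => w (i + j)) (d - i) (fun j => x (i + j)) := by
  simp only [pathMap_apply, ← Finset.sum_range_add, Nat.add_sub_cancel' hi]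

lemma pathMap_eq_smul_sum_add {s : ℝ} {x y : ℕ → ℝ} (h : ∀ j < d, x j = y j + s) :
    pathMap w d x = s • ∑ j ∈ Finset.range d, w j + pathMap w d y := by
  simp only [pathMap_apply, Finset.smul_sum, ← Finset.sum_add_distrib, ← add_smul]
  exact Finset.sum_congr rfl fun j hj => by rw [h j (Finset.mem_range.1 hj), add_comm]

/-- The path simplex with edge vectors `m • w 0, …, m • w (d - 1)`: the convex hull of `0` and the
partial sums of the edge vectors. -/
def pathSimplex (m : ℝ) : Set V := pathMap w d '' descendingSeq m

lemma isCompactConvex_pathSimplex (m : ℝ) : IsCompactConvex (pathSimplex w d m) :=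
  (isCompactConvex_descendingSeq m).image _

lemma zero_mem_pathSimplex {m : ℝ} (hm : 0 ≤ m) : (0 : V) ∈ pathSimplex w d m :=
  ⟨0, const_mem_descendingSeq le_rfl hm, map_zero _⟩

lemma pathSimplex_zero_left {m : ℝ} (hm : 0 ≤ m) : pathSimplex w 0 m = {0} := by
  refine Subset.antisymm ?_ (singleton_subset_iff.2 (zero_mem_pathSimplex w 0 hm))
  rintro _ ⟨x, -, rfl⟩
  simp [pathMap_apply]

lemma pathSimplex_eq_smul {m : ℝ} (hm : 0 ≤ m) : pathSimplex w d m = m • pathSimplex w d 1 := by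
  rw [pathSimplex, descendingSeq_eq_smul hm, image_smul_comm _ _ _ (map_smul _ m), pathSimplex]

lemma pathSimplex_smul {m : ℝ} (hm : 0 ≤ m) :
    pathSimplex (fun j => m • w j) d 1 = pathSimplex w d m := by
  rw [pathSimplex_eq_smul w d hm, pathSimplex, pathSimplex, ← image_smul, image_image]
  refine image_congr' fun x => ?_
  simp only [pathMap_apply, Finset.smul_sum, smul_comm m]

lemma pathMap_image_descendingSeqGE_self {r s : ℝ} (hr : 0 ≤ r) (hs : 0 ≤ s) :
    pathMap w d '' descendingSeqGE (r + s) s d =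
      {s • ∑ j ∈ Finset.range d, w j} + pathSimplex w d r := by
  rw [singleton_add, pathSimplex]
  apply Subset.antisymm
  · rintro _ ⟨x, ⟨hx, hxs⟩, rfl⟩
    refine ⟨_, ⟨_, max_sub_mem_descendingSeq hr hx, rfl⟩, (pathMap_eq_smul_sum_add w d ?_).symm⟩
    intro j hj
    rw [max_eq_left (sub_nonneg.2 (hxs j hj)), sub_add_cancel]
  · rintro _ ⟨_, ⟨y, hy, rfl⟩, rfl⟩
    exact ⟨_, add_const_mem_descendingSeqGE hs hy d, pathMap_eq_smul_sum_add w d fun j _ => rfl⟩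

lemma pathMap_image_descendingSeqGE_inter {i : ℕ} (hi : i ≤ d) {r s : ℝ} (hr : 0 ≤ r)
    {S : Set (ℕ → ℝ)} (hS : S ⊆ descendingSeq s) :
    pathMap w d '' (descendingSeqGE (r + s) s i ∩ {x | (fun j => x (i + j)) ∈ S}) =
      {s • ∑ j ∈ Finset.range i, w j} +
        (pathSimplex w i r + pathMap (fun j => w (i + j)) (d - i) '' S) := by
  rw [singleton_add, pathSimplex]
  apply Subset.antisymm
  · rintro _ ⟨x, ⟨⟨hx, hxs⟩, htail⟩, rfl⟩
    refine ⟨_, ⟨_, ⟨_, max_sub_mem_descendingSeq hr hx, rfl⟩, _, ⟨_, htail, rfl⟩, rfl⟩, ?_⟩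
    have hhead : ∀ j < i, x j = max (x j - s) 0 + s := fun j hj => by
      rw [max_eq_left (sub_nonneg.2 (hxs j hj)), sub_add_cancel]
    rw [pathMap_eq_add_shift w d hi x, pathMap_eq_smul_sum_add w i hhead]
    exact (add_assoc _ _ _).symm
  · rintro _ ⟨_, ⟨_, ⟨y, hy, rfl⟩, _, ⟨z, hz, rfl⟩, rfl⟩, rfl⟩
    set x : ℕ → ℝ := fun j => if j < i then y j + s else z (j - i) with hx
    have htail : (fun j => x (i + j)) = z := by
      funext j
      simp [hx]
    refine ⟨x, ⟨glue_mem_descendingSeqGE hr hy (hS hz) i, by rwa [mem_ofPred_eq, htail]⟩, ?_⟩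
    rw [pathMap_eq_add_shift w d hi x, htail, pathMap_eq_smul_sum_add w i fun j hj => if_pos hj,
      add_assoc]

namespace IsInvariantSimpleValuation

variable {σ : Set V → ℝ} {w d}

lemma pathSimplex_add_eq_sum_cut (hσ : IsInvariantSimpleValuation σ) (m s : ℝ) {L : Set V}
    (hL : IsCompactConvex L) (k : ℕ) :
    σ (pathSimplex w d m + L) = σ (pathMap w d '' descendingSeqGE m s k + L) +
      ∑ i ∈ Finset.range k, (σ (pathMap w d '' (descendingSeqGE m s i ∩ {x | x i ≤ s}) + L) -
        σ (pathMap w d '' (descendingSeqGE m s i ∩ {x | x i = s}) + L)) := by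
  induction k with
  | zero => simp [descendingSeqGE_zero, pathSimplex]
  | succ k ih =>
    have hcut := hσ.image_add_cut (pathMap w d) (.proj k) s
      (isCompactConvex_descendingSeqGE m s k) hL
    simp only [ContinuousLinearMap.proj_apply, ← descendingSeqGE_succ] at hcut
    rw [ih, hcut, Finset.sum_range_succ]
    ring

/-- Cutting a path simplex of size `r + s` by the hyperplanes where one coefficient equals `s`:
the `i`-th piece is a translate of a product of a path simplex of size `r` and one of size `s`. -/
lemma pathSimplex_add_size_add (hσ : IsInvariantSimpleValuation σ) {r s : ℝ} (hr : 0 ≤ r)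
    (hs : 0 ≤ s) {L : Set V} (hL : IsCompactConvex L) :
    σ (pathSimplex w d (r + s) + L) = σ (pathSimplex w d r + L) + ∑ i ∈ Finset.range d,
      (σ (pathSimplex w i r + (pathSimplex (fun j => w (i + j)) (d - i) s + L)) -
        σ (pathSimplex w i r +
          (pathMap (fun j => w (i + j)) (d - i) '' (descendingSeq s ∩ {z | z 0 = s}) + L))) := by
  have hpiece {i : ℕ} (hi : i ≤ d) {S : Set (ℕ → ℝ)} (hS : IsCompactConvex S)
      (hSs : S ⊆ descendingSeq s) :
      σ (pathMap w d '' (descendingSeqGE (r + s) s i ∩ {x | (fun j => x (i + j)) ∈ S}) + L) =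
        σ (pathSimplex w i r + (pathMap (fun j => w (i + j)) (d - i) '' S + L)) := by
    rw [pathMap_image_descendingSeqGE_inter w d hi hr hSs, add_assoc, add_assoc]
    exact hσ.translate _ _ ((isCompactConvex_pathSimplex w i r).add ((hS.image _).add hL))
  rw [hσ.pathSimplex_add_eq_sum_cut (r + s) s hL d, pathMap_image_descendingSeqGE_self w d hr hs,
    add_assoc, hσ.translate _ _ ((isCompactConvex_pathSimplex w d r).add hL)]
  congr 1
  refine Finset.sum_congr rfl fun i hi => ?_
  have hi : i ≤ d := (Finset.mem_range.1 hi).le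
  rw [descendingSeqGE_inter_le, descendingSeqGE_inter_eq,
    hpiece hi (isCompactConvex_descendingSeq s) subset_rfl,
    hpiece (S := descendingSeq s ∩ {z | z 0 = s}) hi
      ((isCompactConvex_descendingSeq s).inter_eq (.proj 0) s) inter_subset_left]
  rfl

end IsInvariantSimpleValuation

end PathSimplex

section Polyhedron

variable {V : Type*} [NormedAddCommGroup V] [InnerProductSpace ℝ V]

/-- The intersection of the half-spaces `⟪a, x⟫ ≤ c`, for `(a, c)` in a list. -/
def polyhedron (l : List (V × ℝ)) : Set V := {x | ∀ p ∈ l, ⟪p.1, x⟫_ℝ ≤ p.2}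

lemma polyhedron_nil : polyhedron ([] : List (V × ℝ)) = univ := by simp [polyhedron]

lemma polyhedron_cons (a : V) (c : ℝ) (l : List (V × ℝ)) :
    polyhedron ((a, c) :: l) = polyhedron l ∩ {x | ⟪a, x⟫_ℝ ≤ c} := by
  ext x
  simp only [polyhedron, List.forall_mem_cons, mem_inter_iff, mem_ofPred_eq, and_comm]

lemma isClosed_polyhedron (l : List (V × ℝ)) : IsClosed (polyhedron l) := by
  simp only [polyhedron, ofPred_forall]
  exact isClosed_biInter fun p _ => isClosed_le (innerSL ℝ p.1).continuous continuous_const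

lemma convex_polyhedron (l : List (V × ℝ)) : Convex ℝ (polyhedron l) := by
  simp only [polyhedron, ofPred_forall]
  exact convex_iInter₂ fun p _ => convex_halfSpace_le (innerSL ℝ p.1).isLinear p.2

/-- The polyhedron `⟪a, x⟫ ≤ 1` for `a ∈ U` and `⟪a, x⟫ ≤ 0` for `a ∈ C`. With right-hand sides
normalized to `1` and `0`, two constraints can be compared by a linear cut through the origin. -/
def normalizedPolyhedron (U C : List V) : Set V :=
  {x | (∀ a ∈ U, ⟪a, x⟫_ℝ ≤ 1) ∧ ∀ a ∈ C, ⟪a, x⟫_ℝ ≤ 0}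

lemma normalizedPolyhedron_eq_polyhedron (U C : List V) : normalizedPolyhedron U C =
    polyhedron (U.map (fun a => (a, 1)) ++ C.map (fun a => (a, 0))) := by
  ext x
  simp only [normalizedPolyhedron, polyhedron, mem_ofPred_eq, List.forall_mem_append,
    List.forall_mem_map]

lemma isCompactConvex_normalizedPolyhedron {U C : List V}
    (h : IsCompact (normalizedPolyhedron U C)) : IsCompactConvex (normalizedPolyhedron U C) :=
  ⟨h, normalizedPolyhedron_eq_polyhedron U C ▸ convex_polyhedron _⟩

lemma normalizedPolyhedron_cons_left (a : V) (U C : List V) :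
    normalizedPolyhedron (a :: U) C = normalizedPolyhedron U C ∩ {x | ⟪a, x⟫_ℝ ≤ 1} := by
  ext x
  simp only [normalizedPolyhedron, List.forall_mem_cons, mem_inter_iff, mem_ofPred_eq]
  tauto

lemma normalizedPolyhedron_cons_right (a : V) (U C : List V) :
    normalizedPolyhedron U (a :: C) = normalizedPolyhedron U C ∩ {x | ⟪a, x⟫_ℝ ≤ 0} := by
  ext x
  simp only [normalizedPolyhedron, List.forall_mem_cons, mem_inter_iff, mem_ofPred_eq]
  tauto

lemma eq_zero_of_forall_smul_mem {K : Set V} (hK : IsCompact K) {x : V}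
    (h : ∀ t : ℝ, 0 ≤ t → t • x ∈ K) : x = 0 := by
  obtain ⟨C, hC⟩ := hK.isBounded.exists_norm_le
  by_contra hx
  have hx : 0 < ‖x‖ := norm_pos_iff.2 hx
  have hC0 : 0 ≤ C := by simpa using hC _ (h 0 le_rfl)
  have hlt := hC _ (h ((C + 1) / ‖x‖) (by positivity))
  rw [norm_smul, Real.norm_of_nonneg (by positivity), div_mul_cancel₀ _ hx.ne'] at hlt
  linarith

lemma eq_zero_of_mem_normalizedPolyhedron {U C : List V} (hK : IsCompact (normalizedPolyhedron U C))
    {x : V} (hx : x ∈ normalizedPolyhedron U C) (hU : ∀ a ∈ U, ⟪a, x⟫_ℝ ≤ 0) : x = 0 := by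
  refine eq_zero_of_forall_smul_mem hK fun t ht => ⟨fun a ha => ?_, fun a ha => ?_⟩ <;>
    rw [real_inner_smul_right]
  · exact (mul_nonpos_of_nonneg_of_nonpos ht (hU a ha)).trans zero_le_one
  · exact mul_nonpos_of_nonneg_of_nonpos ht (hx.2 a ha)

lemma exists_isCompact_normalizedPolyhedron [FiniteDimensional ℝ V] {K : Set V}
    (hK : IsCompact K) : ∃ U : List V,
      IsCompact (normalizedPolyhedron U []) ∧ K ⊆ normalizedPolyhedron U [] := by
  obtain ⟨R, hR0, hR⟩ := hK.isBounded.exists_pos_norm_le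
  have := FiniteDimensional.proper_real V
  let b := stdOrthonormalBasis ℝ V
  let U : List V := (Finset.univ.toList.map fun i => R⁻¹ • b i) ++
    (Finset.univ.toList.map fun i => -(R⁻¹ • b i))
  have hmem (x : V) : x ∈ normalizedPolyhedron U [] ↔ ∀ i, |⟪b i, x⟫_ℝ| ≤ R := by
    simp only [normalizedPolyhedron, U, mem_ofPred_eq, List.forall_mem_append, List.forall_mem_map,
      Finset.mem_toList, Finset.mem_univ, true_implies, List.not_mem_nil, false_implies,
      implies_true, and_true, inner_neg_left, real_inner_smul_left, abs_le', ← mul_neg,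
      inv_mul_le_iff₀ hR0, mul_one, ← forall_and]
  refine ⟨U, Metric.isCompact_of_isClosed_isBounded ?_ ?_, fun x hx => (hmem x).2 fun i => ?_⟩
  · exact normalizedPolyhedron_eq_polyhedron U [] ▸ isClosed_polyhedron _
  · refine isBounded_iff_forall_norm_le.2 ⟨√(∑ i : Fin (finrank ℝ V), R ^ 2), fun x hx => ?_⟩
    apply Real.le_sqrt_of_sq_le
    rw [← b.sum_sq_norm_inner_right]
    exact Finset.sum_le_sum fun i _ => pow_le_pow_left₀ (norm_nonneg _) ((hmem x).1 hx i) 2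
  · calc |⟪b i, x⟫_ℝ| ≤ ‖b i‖ * ‖x‖ := abs_real_inner_le_norm _ _
      _ ≤ R := by rw [b.norm_eq_one, one_mul]; exact hR x hx

lemma exists_antitone_polyhedron_iInter_eq [FiniteDimensional ℝ V] {K : Set V}
    (hK : IsCompactConvex K) : ∃ l : ℕ → List (V × ℝ), (∀ i, IsCompact (polyhedron (l i))) ∧
      Antitone (fun i => polyhedron (l i)) ∧ ⋂ i, polyhedron (l i) = K := by
  have := FiniteDimensional.proper_real V
  obtain ⟨U, hU, hKU⟩ := exists_isCompact_normalizedPolyhedron hK.1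
  obtain ⟨f, c, hfc⟩ := RCLike.iInter_countable_halfSpaces_eq (𝕜 := ℝ) hK.2 hK.1.isClosed
  let p (j : ℕ) : V × ℝ := ((InnerProductSpace.toDual ℝ V).symm (f j), c j)
  let l (i : ℕ) : List (V × ℝ) := U.map (fun a => (a, 1)) ++ (List.range i).map p
  have hmem (i : ℕ) (x : V) :
      x ∈ polyhedron (l i) ↔ x ∈ normalizedPolyhedron U [] ∧ ∀ j < i, f j x ≤ c j := by
    simp only [polyhedron, normalizedPolyhedron, l, p, mem_ofPred_eq, List.forall_mem_append,
      List.forall_mem_map, List.mem_range, InnerProductSpace.toDual_symm_apply, List.not_mem_nil,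
      false_implies, implies_true, and_true]
  have hKx (x : V) : x ∈ K ↔ ∀ j, f j x ≤ c j := by
    rw [← hfc]
    simp
  refine ⟨l, fun i => hU.of_isClosed_subset (isClosed_polyhedron _) fun x hx => ((hmem i x).1 hx).1,
    fun i j hij x hx => ?_, ?_⟩
  · rw [hmem] at hx ⊢
    exact ⟨hx.1, fun k hk => hx.2 k (hk.trans_le hij)⟩
  · ext x
    rw [mem_iInter, hKx]
    refine ⟨fun h j => ((hmem (j + 1) x).1 (h (j + 1))).2 j j.lt_succ_self, fun h i => ?_⟩
    exact (hmem i x).2 ⟨hKU ((hKx x).2 h), fun j _ => h j⟩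

end Polyhedron

section Cone

variable {V : Type*} [NormedAddCommGroup V] [InnerProductSpace ℝ V] {a : V}

/-- The cone with apex `0` over a subset `D` of the hyperplane `⟪a, x⟫ = 1`, this hyperplane being
parametrized by `y ↦ ⟪a, a⟫⁻¹ • a + y` with `y` orthogonal to `a`. -/
def coneOver (a : V) (D : Set (ℝ ∙ a)ᗮ) : Set V :=
  convexHull ℝ (insert 0 ((fun y : (ℝ ∙ a)ᗮ => (⟪a, a⟫_ℝ)⁻¹ • a + (y : V)) '' D))

lemma inner_coe_orthogonal_singleton (y : (ℝ ∙ a)ᗮ) : ⟪a, (y : V)⟫_ℝ = 0 :=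
  Submodule.mem_orthogonal_singleton_iff_inner_right.1 y.2

lemma coneOver_eq_insert {D : Set (ℝ ∙ a)ᗮ} (hD : Convex ℝ D) : coneOver a D = insert 0
    ((fun p : ℝ × (ℝ ∙ a)ᗮ => p.1 • ((⟪a, a⟫_ℝ)⁻¹ • a + (p.2 : V))) '' (Icc 0 1 ×ˢ D)) := by
  rcases D.eq_empty_or_nonempty with rfl | hne
  · simp [coneOver]
  have hbase : Convex ℝ ((fun y : (ℝ ∙ a)ᗮ => (⟪a, a⟫_ℝ)⁻¹ • a + (y : V)) '' D) := by
    simpa only [image_image, Submodule.subtype_apply] using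
      (hD.linear_image (ℝ ∙ a)ᗮ.subtype).translate ((⟪a, a⟫_ℝ)⁻¹ • a)
  rw [coneOver, convexHull_insert (hne.image _), hbase.convexHull_eq, convexJoin_singleton_left]
  obtain ⟨y₀, hy₀⟩ := hne
  ext x
  simp only [segment_eq_image, smul_zero, zero_add, mem_iUnion, exists_prop]
  constructor
  · rintro ⟨_, ⟨y, hy, rfl⟩, t, ht, rfl⟩
    exact .inr ⟨(t, y), ⟨ht, hy⟩, rfl⟩
  · rintro (rfl | ⟨⟨t, y⟩, ⟨ht, hy⟩, rfl⟩)
    · exact ⟨_, mem_image_of_mem _ hy₀, 0, by simp, zero_smul _ _⟩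
    · exact ⟨_, mem_image_of_mem _ hy, t, ht, rfl⟩

lemma mem_coneOver {D : Set (ℝ ∙ a)ᗮ} (hD : Convex ℝ D) {x : V} : x ∈ coneOver a D ↔
    x = 0 ∨ ∃ t ∈ Icc (0 : ℝ) 1, ∃ y ∈ D, t • ((⟪a, a⟫_ℝ)⁻¹ • a + (y : V)) = x := by
  simp only [coneOver_eq_insert hD, mem_insert_iff, mem_image, Prod.exists, mem_prod, and_assoc,
    exists_and_left]

lemma isCompactConvex_coneOver {D : Set (ℝ ∙ a)ᗮ} (hD : IsCompactConvex D) :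
    IsCompactConvex (coneOver a D) := by
  refine ⟨?_, convex_convexHull ℝ _⟩
  rw [coneOver_eq_insert hD.2]
  exact ((isCompact_Icc.prod hD.1).image (by fun_prop)).insert 0

lemma inner_smul_inv_smul_add (ha : a ≠ 0) (u y : (ℝ ∙ a)ᗮ) (c t : ℝ) :
    ⟪(u : V) - c • a, t • ((⟪a, a⟫_ℝ)⁻¹ • a + (y : V))⟫_ℝ = t * (⟪u, y⟫_ℝ - c) := by
  have haa : ⟪a, a⟫_ℝ ≠ 0 := inner_self_ne_zero.2 ha
  simp only [inner_smul_right, inner_sub_left, inner_add_right, real_inner_smul_left,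
    inner_coe_orthogonal_singleton, real_inner_comm a (u : V), Submodule.coe_inner]
  field_simp
  ring

lemma coe_sub_smul_ne_zero {u : (ℝ ∙ a)ᗮ} (hu : u ≠ 0) (c : ℝ) : (u : V) - c • a ≠ 0 := by
  intro h
  have hinner : ⟪(u : V), (u : V) - c • a⟫_ℝ = 0 := by rw [h, inner_zero_right]
  rw [inner_sub_right, inner_smul_right, real_inner_comm a (u : V),
    inner_coe_orthogonal_singleton, mul_zero, sub_zero, inner_self_eq_zero] at hinner
  exact hu (Subtype.ext hinner)

lemma coneOver_inter_le (ha : a ≠ 0) {D : Set (ℝ ∙ a)ᗮ} (hD : Convex ℝ D) (u : (ℝ ∙ a)ᗮ) (c : ℝ) :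
    coneOver a D ∩ {x | ⟪(u : V) - c • a, x⟫_ℝ ≤ 0} = coneOver a (D ∩ {y | ⟪u, y⟫_ℝ ≤ c}) := by
  have hcut : Convex ℝ (D ∩ {y | ⟪u, y⟫_ℝ ≤ c}) :=
    hD.inter (convex_halfSpace_le (innerSL ℝ u).isLinear c)
  ext x
  simp only [mem_inter_iff, mem_ofPred_eq, mem_coneOver hD, mem_coneOver hcut]
  constructor
  · rintro ⟨rfl | ⟨t, ht, y, hy, rfl⟩, hx⟩
    · exact .inl rfl
    · rw [inner_smul_inv_smul_add ha] at hx
      rcases ht.1.eq_or_lt with rfl | h0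
      · exact .inl (zero_smul _ _)
      · exact .inr ⟨t, ht, y, ⟨hy, sub_nonpos.1 (nonpos_of_mul_nonpos_right hx h0)⟩, rfl⟩
  · rintro (rfl | ⟨t, ht, y, ⟨hy, hyc⟩, rfl⟩)
    · exact ⟨.inl rfl, (inner_zero_right _).le⟩
    · refine ⟨.inr ⟨t, ht, y, hy, rfl⟩, ?_⟩
      rw [inner_smul_inv_smul_add ha]
      exact mul_nonpos_of_nonneg_of_nonpos ht.1 (sub_nonpos.2 hyc)

lemma coneOver_inter_ge (ha : a ≠ 0) {D : Set (ℝ ∙ a)ᗮ} (hD : Convex ℝ D) (u : (ℝ ∙ a)ᗮ) (c : ℝ) :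
    coneOver a D ∩ {x | 0 ≤ ⟪(u : V) - c • a, x⟫_ℝ} = coneOver a (D ∩ {y | c ≤ ⟪u, y⟫_ℝ}) := by
  have hneg : ((-u : (ℝ ∙ a)ᗮ) : V) - -c • a = -((u : V) - c • a) := by
    rw [Submodule.coe_neg, neg_smul, neg_sub_neg, neg_sub]
  have := coneOver_inter_le ha hD (-u) (-c)
  simpa only [hneg, inner_neg_left, neg_nonpos, neg_le_neg_iff] using this

lemma IsDissectionAdditive.comp_coneOver {φ : Set V → ℝ} (hφ : IsDissectionAdditive φ)
    (ha : a ≠ 0) : IsDissectionAdditive fun D => φ (coneOver a D) where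
  empty := by
    simpa [coneOver] using hφ.flat a 0 {0} (.singleton 0) ha (by simp)
  flat u c K hK hu hc := by
    refine hφ.flat (u - c • a) 0 _ (isCompactConvex_coneOver hK) (coe_sub_smul_ne_zero hu c) ?_
    intro x hx
    rcases (mem_coneOver hK.2).1 hx with rfl | ⟨t, -, y, hy, rfl⟩
    · exact inner_zero_right _
    · rw [inner_smul_inv_smul_add ha, hc y hy, sub_self, mul_zero]
  cut u c K hK hu := by
    rw [← coneOver_inter_le ha hK.2, ← coneOver_inter_ge ha hK.2]
    exact hφ.cut _ _ _ (isCompactConvex_coneOver hK) (coe_sub_smul_ne_zero hu c)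

end Cone

section Polytope

variable {V : Type*} [NormedAddCommGroup V] [InnerProductSpace ℝ V] {a : V}

/-- The vectors `w 0, …, w (n - 1)` are nonzero and pairwise orthogonal, so that the path simplices
on them are orthoschemes. -/
def IsOrthogonalPath (w : ℕ → V) (n : ℕ) : Prop :=
  (∀ i < n, w i ≠ 0) ∧ ∀ i < n, ∀ j < n, i ≠ j → ⟪w i, w j⟫_ℝ = 0

/-- The path in `V` whose first edge leads from `0` to the base hyperplane of the cone over a path
in the orthogonal complement of `a`, and then follows that path. -/
def conePath (a : V) (w : ℕ → (ℝ ∙ a)ᗮ) : ℕ → V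
  | 0 => (⟪a, a⟫_ℝ)⁻¹ • a
  | j + 1 => w j

lemma IsOrthogonalPath.conePath (ha : a ≠ 0) {w : ℕ → (ℝ ∙ a)ᗮ} {n : ℕ}
    (hw : IsOrthogonalPath w n) : IsOrthogonalPath (conePath a w) (n + 1) := by
  have hzero (j : ℕ) : ⟪(⟪a, a⟫_ℝ)⁻¹ • a, (w j : V)⟫_ℝ = 0 := by
    rw [real_inner_smul_left, inner_coe_orthogonal_singleton, mul_zero]
  refine ⟨fun i hi => ?_, fun i hi j hj hij => ?_⟩
  · cases i with
    | zero => exact smul_ne_zero (inv_ne_zero (inner_self_ne_zero.2 ha)) ha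
    | succ i => exact (Submodule.coe_eq_zero).not.2 (hw.1 i (Nat.succ_lt_succ_iff.1 hi))
  · cases i with
    | zero =>
      cases j with
      | zero => exact absurd rfl hij
      | succ j => exact hzero j
    | succ i =>
      cases j with
      | zero => exact (real_inner_comm _ _).trans (hzero i)
      | succ j => exact hw.2 i (by omega) j (by omega) (by omega)

lemma pathMap_conePath (w : ℕ → (ℝ ∙ a)ᗮ) (n : ℕ) (x : ℕ → ℝ) : pathMap (conePath a w) (n + 1) x =
    x 0 • (⟪a, a⟫_ℝ)⁻¹ • a + (pathMap w n (fun j => x (j + 1)) : (ℝ ∙ a)ᗮ) := by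
  simp only [pathMap_apply, Finset.sum_range_succ', conePath, Submodule.coe_sum,
    Submodule.coe_smul, add_comm]

lemma coneOver_pathSimplex (w : ℕ → (ℝ ∙ a)ᗮ) (n : ℕ) :
    coneOver a (pathSimplex w n 1) = pathSimplex (conePath a w) (n + 1) 1 := by
  ext x
  rw [mem_coneOver (isCompactConvex_pathSimplex w n 1).2]
  constructor
  · rintro (rfl | ⟨t, ht, _, ⟨y, ⟨hy, hy1⟩, rfl⟩, rfl⟩)
    · exact zero_mem_pathSimplex _ _ zero_le_one
    refine ⟨fun | 0 => t | j + 1 => t * y j, ⟨antitone_nat_of_succ_le fun j => ?_, fun j => ?_⟩, ?_⟩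
    · cases j with
      | zero => exact mul_le_of_le_one_right ht.1 (hy1 0).2
      | succ j => exact mul_le_mul_of_nonneg_left (hy j.le_succ) ht.1
    · cases j with
      | zero => exact ht
      | succ j => exact ⟨mul_nonneg ht.1 (hy1 j).1, mul_le_one₀ ht.2 (hy1 j).1 (hy1 j).2⟩
    · rw [pathMap_conePath, smul_add, ← Submodule.coe_smul, ← map_smul]
      rfl
  · rintro ⟨x, ⟨hx, hx1⟩, rfl⟩
    rcases (hx1 0).1.eq_or_lt with h0 | h0
    · have hzero (j : ℕ) : x j = 0 := le_antisymm ((hx j.zero_le).trans h0.ge) (hx1 j).1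
      exact .inl (by simp [pathMap_apply, hzero])
    · refine .inr ⟨x 0, hx1 0, _, ⟨(x 0)⁻¹ • fun j => x (j + 1), ⟨fun i j hij => ?_, fun j => ?_⟩,
        rfl⟩, ?_⟩
      · exact mul_le_mul_of_nonneg_left (hx (Nat.succ_le_succ hij)) (inv_nonneg.2 h0.le)
      · exact ⟨mul_nonneg (inv_nonneg.2 h0.le) (hx1 _).1,
          inv_mul_le_one_of_le₀ (hx (Nat.zero_le _)) h0.le⟩
      · rw [pathMap_conePath, smul_add, ← Submodule.coe_smul, ← map_smul, smul_inv_smul₀ h0.ne']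

lemma inner_inv_smul_add (ha : a ≠ 0) (y : (ℝ ∙ a)ᗮ) :
    ⟪a, (⟪a, a⟫_ℝ)⁻¹ • a + (y : V)⟫_ℝ = 1 := by
  rw [inner_add_right, inner_smul_right, inv_mul_cancel₀ (inner_self_ne_zero.2 ha),
    inner_coe_orthogonal_singleton, add_zero]

lemma IsDissectionAdditive.singleton [Nontrivial V] {φ : Set V → ℝ}
    (hφ : IsDissectionAdditive φ) (x : V) : φ {x} = 0 := by
  obtain ⟨u, hu⟩ := exists_ne (0 : V)
  exact hφ.flat u ⟪u, x⟫_ℝ {x} (.singleton x) hu (by simp)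

lemma IsDissectionAdditive.normalizedPolyhedron_eq_zero_of_forall_nonpos [Nontrivial V]
    {φ : Set V → ℝ} (hφ : IsDissectionAdditive φ) {U C : List V}
    (hK : IsCompact (normalizedPolyhedron U C))
    (hU : ∀ x ∈ normalizedPolyhedron U C, ∀ a ∈ U, ⟪a, x⟫_ℝ ≤ 0) :
    φ (normalizedPolyhedron U C) = 0 := by
  have hzero : normalizedPolyhedron U C = {0} := by
    refine Subset.antisymm
      (fun x hx => eq_zero_of_mem_normalizedPolyhedron hK hx (hU x hx)) ?_
    simp [normalizedPolyhedron]
  rw [hzero, hφ.singleton]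

/-- The constraints `⟪c, x⟫ ≤ 0` restricted to the base hyperplane of `coneOver a`. -/
def coneBaseConstraints [FiniteDimensional ℝ V] (a : V) (C : List V) : List ((ℝ ∙ a)ᗮ × ℝ) :=
  C.map fun c => ((ℝ ∙ a)ᗮ.orthogonalProjectionOnto c, -⟪c, (⟪a, a⟫_ℝ)⁻¹ • a⟫_ℝ)

variable [FiniteDimensional ℝ V]

lemma mem_polyhedron_coneBaseConstraints {C : List V} {y : (ℝ ∙ a)ᗮ} :
    y ∈ polyhedron (coneBaseConstraints a C) ↔
      ∀ c ∈ C, ⟪c, (⟪a, a⟫_ℝ)⁻¹ • a + (y : V)⟫_ℝ ≤ 0 := by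
  simp only [polyhedron, coneBaseConstraints, mem_ofPred_eq, List.forall_mem_map]
  refine forall₂_congr fun c _ => ?_
  rw [real_inner_comm, Submodule.inner_orthogonalProjectionOnto_eq_of_mem_left, inner_add_right,
    real_inner_comm, le_neg_iff_add_nonpos_left]

lemma isCompact_polyhedron_coneBaseConstraints (ha : a ≠ 0) {C : List V}
    (hK : IsCompact (normalizedPolyhedron [a] C)) :
    IsCompact (polyhedron (coneBaseConstraints a C)) := by
  have hemb : IsClosedEmbedding fun y : (ℝ ∙ a)ᗮ => (⟪a, a⟫_ℝ)⁻¹ • a + (y : V) :=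
    ((IsometryEquiv.addLeft _).isometry.comp (ℝ ∙ a)ᗮ.subtypeₗᵢ.isometry).isClosedEmbedding
  convert hemb.isCompact_preimage hK using 1
  ext y
  simp only [mem_polyhedron_coneBaseConstraints, normalizedPolyhedron, mem_preimage, mem_ofPred_eq,
    List.forall_mem_singleton, inner_inv_smul_add ha, le_refl, true_and]

lemma normalizedPolyhedron_singleton_eq_coneOver (ha : a ≠ 0) {C : List V}
    (hK : IsCompact (normalizedPolyhedron [a] C)) :
    normalizedPolyhedron [a] C = coneOver a (polyhedron (coneBaseConstraints a C)) := by
  ext x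
  rw [mem_coneOver (convex_polyhedron (coneBaseConstraints a C))]
  constructor
  · intro hx
    refine or_iff_not_imp_left.2 fun hx0 => ?_
    have hpos : 0 < ⟪a, x⟫_ℝ := by
      by_contra! hle
      exact hx0 (eq_zero_of_mem_normalizedPolyhedron hK hx (List.forall_mem_singleton.2 hle))
    have hperp : (⟪a, x⟫_ℝ)⁻¹ • x - (⟪a, a⟫_ℝ)⁻¹ • a ∈ (ℝ ∙ a)ᗮ := by
      rw [Submodule.mem_orthogonal_singleton_iff_inner_right, inner_sub_right, inner_smul_right,
        inner_smul_right, inv_mul_cancel₀ hpos.ne', inv_mul_cancel₀ (inner_self_ne_zero.2 ha),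
        sub_self]
    refine ⟨⟪a, x⟫_ℝ, ⟨hpos.le, hx.1 a (List.mem_singleton_self a)⟩, ⟨_, hperp⟩,
      mem_polyhedron_coneBaseConstraints.2 fun c hc => ?_, ?_⟩
    · rw [add_sub_cancel, inner_smul_right]
      exact mul_nonpos_of_nonneg_of_nonpos (inv_nonneg.2 hpos.le) (hx.2 c hc)
    · rw [add_sub_cancel, smul_inv_smul₀ hpos.ne']
  · rintro (rfl | ⟨t, ht, y, hy, rfl⟩)
    · simp [normalizedPolyhedron]
    refine ⟨List.forall_mem_singleton.2 ?_, fun c hc => ?_⟩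
    · rw [inner_smul_right, inner_inv_smul_add ha, mul_one]
      exact ht.2
    · rw [inner_smul_right]
      exact mul_nonpos_of_nonneg_of_nonpos ht.1 (mem_polyhedron_coneBaseConstraints.1 hy c hc)

namespace IsDissectionAdditive

variable {φ : Set V → ℝ}

variable [Nontrivial V] (hφ : IsDissectionAdditive φ)
  (hcone : ∀ a : V, a ≠ 0 → ∀ l : List ((ℝ ∙ a)ᗮ × ℝ), IsCompact (polyhedron l) →
    φ (coneOver a (polyhedron l)) = 0)
include hφ hcone

/-- A normalized polyhedron with one inhomogeneous constraint is a cone. With two, `a` and `b`, the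
hyperplane `⟪a - b, x⟫ = 0` separates the part where `a` is redundant from that where `b` is. -/
lemma normalizedPolyhedron_eq_zero : ∀ U C : List V, IsCompact (normalizedPolyhedron U C) →
    φ (normalizedPolyhedron U C) = 0
  | [], C, hK => hφ.normalizedPolyhedron_eq_zero_of_forall_nonpos hK (by simp)
  | [a], C, hK => by
    rcases eq_or_ne a 0 with rfl | ha
    · exact hφ.normalizedPolyhedron_eq_zero_of_forall_nonpos hK (by simp)
    · rw [normalizedPolyhedron_singleton_eq_coneOver ha hK]
      exact hcone a ha _ (isCompact_polyhedron_coneBaseConstraints ha hK)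
  | a :: b :: U, C, hK => by
    rcases eq_or_ne a b with rfl | hab
    · have hdup : normalizedPolyhedron (a :: a :: U) C = normalizedPolyhedron (a :: U) C := by
        simp only [normalizedPolyhedron_cons_left, inter_assoc, inter_self]
      rw [hdup] at hK ⊢
      exact normalizedPolyhedron_eq_zero (a :: U) C hK
    have hle : normalizedPolyhedron (a :: b :: U) C ∩ {x | ⟪a - b, x⟫_ℝ ≤ 0} =
        normalizedPolyhedron (b :: U) ((a - b) :: C) := by
      ext x
      simp only [normalizedPolyhedron, List.forall_mem_cons, mem_inter_iff, mem_ofPred_eq,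
        inner_sub_left]
      grind
    have hge : normalizedPolyhedron (a :: b :: U) C ∩ {x | 0 ≤ ⟪a - b, x⟫_ℝ} =
        normalizedPolyhedron (a :: U) ((b - a) :: C) := by
      ext x
      simp only [normalizedPolyhedron, List.forall_mem_cons, mem_inter_iff, mem_ofPred_eq,
        inner_sub_left]
      grind
    have hKc := isCompactConvex_normalizedPolyhedron hK
    rw [hφ.cut (a - b) 0 _ hKc (sub_ne_zero.2 hab), hle, hge,
      normalizedPolyhedron_eq_zero (b :: U) _ (hle ▸ (hKc.inter_le (innerSL ℝ (a - b)) 0).1),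
      normalizedPolyhedron_eq_zero (a :: U) _ (hge ▸ (hKc.inter_ge (innerSL ℝ (a - b)) 0).1),
      add_zero]
termination_by U => U.length

lemma normalizedPolyhedron_inter_polyhedron_eq_zero (l : List (V × ℝ)) {U C : List V}
    (hK : IsCompact (normalizedPolyhedron U C)) :
    φ (normalizedPolyhedron U C ∩ polyhedron l) = 0 := by
  induction l generalizing U C with
  | nil =>
    rw [polyhedron_nil, inter_univ]
    exact hφ.normalizedPolyhedron_eq_zero hcone U C hK
  | cons p l ih =>
    obtain ⟨a, c⟩ := p
    have hKc := isCompactConvex_normalizedPolyhedron hK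
    have hupper (b : V) : φ (normalizedPolyhedron U C ∩ polyhedron l ∩ {x | ⟪b, x⟫_ℝ ≤ 1}) = 0 := by
      rw [inter_right_comm, ← normalizedPolyhedron_cons_left]
      apply ih
      rw [normalizedPolyhedron_cons_left]
      exact (hKc.inter_le (innerSL ℝ b) 1).1
    rw [polyhedron_cons, ← inter_assoc]
    rcases lt_trichotomy c 0 with hc | rfl | hc
    · have hset : {x : V | ⟪a, x⟫_ℝ ≤ c} = {x | 1 ≤ ⟪c⁻¹ • a, x⟫_ℝ} := by
        ext x
        rw [mem_ofPred_eq, mem_ofPred_eq, real_inner_smul_left, ← div_eq_inv_mul,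
          le_div_iff_of_neg hc, one_mul]
      rw [hset]
      rcases eq_or_ne (c⁻¹ • a) 0 with h0 | h0
      · simpa [h0, not_le.2 (zero_lt_one' ℝ)] using hφ.empty
      · have hcut := hφ.cut _ 1 _ (hKc.inter (isClosed_polyhedron l) (convex_polyhedron l)) h0
        rw [ih hK, hupper, zero_add] at hcut
        exact hcut.symm
    · rw [inter_right_comm, ← normalizedPolyhedron_cons_right]
      apply ih
      rw [normalizedPolyhedron_cons_right]
      exact (hKc.inter_le (innerSL ℝ a) 0).1
    · have hset : {x : V | ⟪a, x⟫_ℝ ≤ c} = {x | ⟪c⁻¹ • a, x⟫_ℝ ≤ 1} := by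
        ext x
        rw [mem_ofPred_eq, mem_ofPred_eq, real_inner_smul_left, inv_mul_le_iff₀ hc, mul_one]
      rw [hset]
      exact hupper _

end IsDissectionAdditive

end Polytope

namespace IsDissectionAdditive

lemma polyhedron_eq_zero {n : ℕ} {V : Type*} [NormedAddCommGroup V] [InnerProductSpace ℝ V]
    [FiniteDimensional ℝ V] (hn : finrank ℝ V = n) {φ : Set V → ℝ} (hφ : IsDissectionAdditive φ)
    (hpath : ∀ w : ℕ → V, IsOrthogonalPath w n → φ (pathSimplex w n 1) = 0)
    (l : List (V × ℝ)) (hl : IsCompact (polyhedron l)) : φ (polyhedron l) = 0 := by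
  induction n generalizing V with
  | zero =>
    have : Subsingleton V := finrank_zero_iff.1 hn
    have hzero := hpath 0 (by simp [IsOrthogonalPath])
    rw [pathSimplex_zero_left 0 zero_le_one] at hzero
    rcases (polyhedron l).eq_empty_or_nonempty with h | h
    · rw [h, hφ.empty]
    · rwa [subsingleton_of_subsingleton.eq_singleton_of_mem (h.some_mem),
        Subsingleton.elim h.some 0]
  | succ n ih =>
    have : Nontrivial V := nontrivial_of_finrank_pos (R := ℝ) (by omega)
    have : Fact (finrank ℝ V = n + 1) := ⟨hn⟩
    obtain ⟨U, hU, hlU⟩ := exists_isCompact_normalizedPolyhedron hl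
    rw [← inter_eq_right.2 hlU]
    refine hφ.normalizedPolyhedron_inter_polyhedron_eq_zero (fun a ha => ?_) l hU
    refine ih (Submodule.finrank_orthogonal_span_singleton ha) (hφ.comp_coneOver ha) fun w hw => ?_
    rw [coneOver_pathSimplex]
    exact hpath _ (hw.conePath ha)

theorem eq_zero_of_pathSimplex_eq_zero {V : Type*} [NormedAddCommGroup V] [InnerProductSpace ℝ V]
    [FiniteDimensional ℝ V] {φ : Set V → ℝ} (hφ : IsDissectionAdditive φ)
    (hcont : IsContinuousFromAbove φ)
    (hpath : ∀ w : ℕ → V, IsOrthogonalPath w (finrank ℝ V) → φ (pathSimplex w (finrank ℝ V) 1) = 0)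
    {K : Set V} (hK : IsCompactConvex K) : φ K = 0 := by
  obtain ⟨l, hl, hanti, hinter⟩ := exists_antitone_polyhedron_iInter_eq hK
  have hlim := hcont _ (fun i => ⟨hl i, convex_polyhedron _⟩) hanti
  simp only [hinter, hφ.polyhedron_eq_zero rfl hpath _ (hl _)] at hlim
  exact tendsto_nhds_unique hlim tendsto_const_nhds

end IsDissectionAdditive

section OrthogonalSum

variable {V : Type*} [NormedAddCommGroup V] [InnerProductSpace ℝ V]

lemma image_coe_add_eq_preimage_inter (E : Submodule ℝ V) [E.HasOrthogonalProjection] (A : Set E)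
    {B : Set V} (hB : B ⊆ Eᗮ) :
    (↑) '' A + B = E.orthogonalProjectionOnto ⁻¹' A ∩
      (fun x => x - E.orthogonalProjectionOnto x) ⁻¹' B := by
  apply Subset.antisymm
  · rintro _ ⟨_, ⟨a, ha, rfl⟩, b, hb, rfl⟩
    have hproj : E.orthogonalProjectionOnto ((a : V) + b) = a := by
      rw [map_add, Submodule.orthogonalProjectionOnto_mem_subspace_eq_self,
        Submodule.orthogonalProjectionOnto_eq_zero_iff.2 (hB hb), add_zero]
    refine ⟨?_, ?_⟩
    · rwa [mem_preimage, hproj]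
    · rwa [mem_preimage, hproj, add_sub_cancel_left]
  · rintro x ⟨hxA, hxB⟩
    exact ⟨_, ⟨_, hxA, rfl⟩, _, hxB, add_sub_cancel _ _⟩

lemma reflection_coe {E : Submodule ℝ V} (u x : E) :
    (ℝ ∙ (u : V))ᗮ.reflection x = ((ℝ ∙ u)ᗮ.reflection x : E) := by
  simp [Submodule.reflection_orthogonal_apply, Submodule.reflection_singleton_apply]

lemma image_coe_image_reflection_add {E : Submodule ℝ V} (u : E) (A : Set E) {B : Set V}
    (hB : B ⊆ Eᗮ) : (↑) '' ((ℝ ∙ u)ᗮ.reflection '' A) + B =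
      (ℝ ∙ (u : V))ᗮ.reflection '' ((↑) '' A + B) := by
  have hfix : (ℝ ∙ (u : V))ᗮ.reflection '' B = B := by
    refine EqOn.image_eq_self fun b hb => Submodule.reflection_mem_subspace_eq_self ?_
    exact Submodule.mem_orthogonal_singleton_iff_inner_right.2 (hB hb u u.2)
  rw [image_add, hfix, image_image, image_image]
  simp only [reflection_coe]

variable {σ : Set V → ℝ}

lemma IsInvariantSimpleValuation.image_coe_add (hσ : IsInvariantSimpleValuation σ)
    (E : Submodule ℝ V) [E.HasOrthogonalProjection] {B : Set V} (hBc : IsCompactConvex B)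
    (hB : B ⊆ Eᗮ) : IsInvariantSimpleValuation fun A : Set E => σ ((↑) '' A + B) where
  empty := by simp [hσ.empty]
  union_add_inter K L hK hL hKL := by
    have hunion : ((↑) '' (K ∪ L) + B : Set V) = ((↑) '' K + B) ∪ ((↑) '' L + B) := by
      rw [image_union, union_add]
    have hinter : ((↑) '' (K ∩ L) + B : Set V) = ((↑) '' K + B) ∩ ((↑) '' L + B) := by
      rw [image_coe_add_eq_preimage_inter E _ hB, preimage_inter, inter_inter_distrib_right,
        image_coe_add_eq_preimage_inter E K hB, image_coe_add_eq_preimage_inter E L hB]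
    rw [hunion, hinter]
    exact hσ.union_add_inter _ _ (hK.image_coe.add hBc) (hL.image_coe.add hBc)
      (hunion ▸ (hKL.linear_image E.subtype).add hBc.2)
  translate v K hK := by
    have hcoe : ((↑) '' ({v} + K) : Set V) = {(v : V)} + (↑) '' K := by
      simp only [singleton_add, image_image, Submodule.coe_add]
    rw [hcoe, add_assoc, hσ.translate _ _ (hK.image_coe.add hBc)]
  reflect u K hK := by
    rw [image_coe_image_reflection_add u K hB, hσ.reflect _ _ (hK.image_coe.add hBc)]
  flat u c K hK hu hc := by
    refine hσ.flat (u : V) c _ (hK.image_coe.add hBc) (by simpa using hu) ?_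
    rintro _ ⟨_, ⟨a, ha, rfl⟩, b, hb, rfl⟩
    rw [inner_add_right, hB hb u u.2, add_zero, ← hc a ha, Submodule.coe_inner]
  continuousFromAbove K hK hanti := by
    have hinter : ((↑) '' (⋂ i, K i) + B : Set V) = ⋂ i, ((↑) '' K i + B) := by
      simp only [image_coe_add_eq_preimage_inter E _ hB, preimage_iInter, iInter_inter]
    simpa only [hinter] using hσ.continuousFromAbove _ (fun i => (hK i).image_coe.add hBc)
      fun i j hij => add_subset_add_right (image_mono (hanti hij))

end OrthogonalSum

section UnitCubes

variable {V : Type*} [NormedAddCommGroup V] [InnerProductSpace ℝ V] {σ : Set V → ℝ}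

/-- The normalisation obtained by subtracting a multiple of the volume: `σ` is zero on the cube
spanned by any orthonormal family of full size. -/
def VanishesOnUnitCubes (σ : Set V → ℝ) : Prop :=
  ∀ v : Fin (finrank ℝ V) → V, Orthonormal ℝ v → σ (parallelepiped v) = 0

lemma VanishesOnUnitCubes.parallelepiped_eq_zero (hcube : VanishesOnUnitCubes σ) {ι : Type*}
    [Fintype ι] (hι : Fintype.card ι = finrank ℝ V) {v : ι → V} (hv : Orthonormal ℝ v) :
    σ (parallelepiped v) = 0 := by
  let e := Fintype.equivFinOfCardEq hι
  rw [← parallelepiped_comp_equiv v e.symm]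
  exact hcube _ (hv.comp _ e.symm.injective)

variable (V) in
/-- The conclusion of the induction on dimension: an invariant simple valuation is determined by
its value on unit cubes. -/
def UnitCubesDetermine : Prop :=
  ∀ σ : Set V → ℝ, IsInvariantSimpleValuation σ → VanishesOnUnitCubes σ →
    ∀ K, IsCompactConvex K → σ K = 0

lemma isCompactConvex_parallelepiped {ι : Type*} [Fintype ι] (v : ι → V) :
    IsCompactConvex (parallelepiped v) := by
  rw [parallelepiped_eq_sum_segment]
  exact .sum _ fun i _ => .segment 0 (v i)

lemma image_coe_parallelepiped (E : Submodule ℝ V) {ι : Type*} [Fintype ι] (v : ι → E) :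
    ((↑) '' parallelepiped v : Set V) = parallelepiped fun i => (v i : V) :=
  image_parallelepiped E.subtype v

lemma parallelepiped_sumElim {ι κ : Type*} [Fintype ι] [Fintype κ] (u : ι → V) (v : κ → V) :
    parallelepiped (Sum.elim u v) = parallelepiped u + parallelepiped v := by
  simp only [parallelepiped_eq_sum_segment, Fintype.sum_sum_type, Sum.elim_inl, Sum.elim_inr]

lemma orthonormal_sumElim_coe {E : Submodule ℝ V} {ι κ : Type*} {u : ι → Eᗮ} {v : κ → E}
    (hu : Orthonormal ℝ u) (hv : Orthonormal ℝ v) :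
    Orthonormal ℝ (Sum.elim (fun i => (u i : V)) fun k => (v k : V)) := by
  refine ⟨fun i => ?_, fun i j hij => ?_⟩
  · rcases i with i | k
    exacts [hu.1 i, hv.1 k]
  · rcases i with i | k <;> rcases j with j | l
    · exact hu.2 fun h => hij (congrArg _ h)
    · exact Submodule.inner_left_of_mem_orthogonal (v l).2 (u i).2
    · exact Submodule.inner_right_of_mem_orthogonal (v k).2 (u j).2
    · exact hv.2 fun h => hij (congrArg _ h)

namespace IsInvariantSimpleValuation

variable [FiniteDimensional ℝ V]

/-- By the hypothesis on `Eᗮ`, the second summand may be replaced by a unit cube of `Eᗮ`; the sum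
is then a unit cube of `V`. -/
lemma image_parallelepiped_add_eq_zero (hσ : IsInvariantSimpleValuation σ)
    (hcube : VanishesOnUnitCubes σ) {E : Submodule ℝ V} (hE : UnitCubesDetermine Eᗮ) {ι : Type*}
    [Fintype ι] (hι : Fintype.card ι = finrank ℝ E) {v : ι → E} (hv : Orthonormal ℝ v) {B : Set V}
    (hBc : IsCompactConvex B) (hB : B ⊆ Eᗮ) : σ ((↑) '' parallelepiped v + B) = 0 := by
  have hQ : IsCompactConvex ((↑) '' parallelepiped v : Set V) :=
    (isCompactConvex_parallelepiped v).image_coe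
  have hQE : ((↑) '' parallelepiped v : Set V) ⊆ Eᗮᗮ := by
    rintro _ ⟨x, -, rfl⟩
    exact E.le_orthogonal_orthogonal x.2
  have hsum := hE _ (hσ.image_coe_add Eᗮ hQ hQE) (fun u hu => ?_) ((↑) ⁻¹' B) hBc.preimage_coe
  · rwa [image_preimage_eq_of_subset (by simpa using hB), add_comm] at hsum
  · beta_reduce
    rw [image_coe_parallelepiped, image_coe_parallelepiped, ← parallelepiped_sumElim]
    refine hcube.parallelepiped_eq_zero ?_ (orthonormal_sumElim_coe hu hv)
    rw [Fintype.card_sum, Fintype.card_fin, hι, add_comm, Submodule.finrank_add_finrank_orthogonal]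

lemma add_eq_zero_of_subset_orthogonal (hσ : IsInvariantSimpleValuation σ)
    (hcube : VanishesOnUnitCubes σ) {E : Submodule ℝ V} (hE : UnitCubesDetermine E)
    (hE' : UnitCubesDetermine Eᗮ) {A B : Set V} (hA : IsCompactConvex A) (hAE : A ⊆ E)
    (hB : IsCompactConvex B) (hBE : B ⊆ Eᗮ) : σ (A + B) = 0 := by
  have hsum := hE _ (hσ.image_coe_add E hB hBE) (fun v hv =>
    hσ.image_parallelepiped_add_eq_zero hcube hE' (Fintype.card_fin _) hv hB hBE) _ hA.preimage_coe
  rwa [image_preimage_eq_of_subset (by simpa using hAE)] at hsum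

lemma segment_add_eq_zero (hσ : IsInvariantSimpleValuation σ) (hcube : VanishesOnUnitCubes σ)
    {e : V} (he : ‖e‖ = 1) (hE : UnitCubesDetermine (ℝ ∙ e)ᗮ) {B : Set V} (hBc : IsCompactConvex B)
    (hB : B ⊆ (ℝ ∙ e)ᗮ) : σ (segment ℝ 0 e + B) = 0 := by
  have he0 : e ≠ 0 := norm_ne_zero_iff.1 (he ▸ one_ne_zero)
  let v : Unit → ℝ ∙ e := fun _ => ⟨e, Submodule.mem_span_singleton_self e⟩
  have hv : Orthonormal ℝ v := ⟨fun _ => he, fun i j hij => absurd (Subsingleton.elim i j) hij⟩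
  have himage : ((↑) '' parallelepiped v : Set V) = segment ℝ 0 e := by
    rw [image_coe_parallelepiped, parallelepiped_eq_sum_segment, Fintype.sum_unique]
  rw [← himage]
  exact hσ.image_parallelepiped_add_eq_zero hcube hE
    (by rw [finrank_span_singleton he0, Fintype.card_unit]) hv hBc hB

end IsInvariantSimpleValuation

end UnitCubes

section Homogeneity

variable {V : Type*} [NormedAddCommGroup V] [InnerProductSpace ℝ V] {σ : Set V → ℝ}

/-- Positive homogeneity of degree one on compact convex sets. -/
def IsPosHomogeneous (σ : Set V → ℝ) : Prop :=
  ∀ ⦃t : ℝ⦄, 0 < t → ∀ ⦃K : Set V⦄, IsCompactConvex K → σ (t • K) = t * σ K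

lemma smul_inter_inner_le {t : ℝ} (ht : 0 < t) (K : Set V) (u : V) (c : ℝ) :
    t • K ∩ {x | ⟪u, x⟫_ℝ ≤ t * c} = t • (K ∩ {x | ⟪u, x⟫_ℝ ≤ c}) := by
  rw [smul_set_inter₀ ht.ne']
  congr 1
  ext x
  rw [mem_smul_set_iff_inv_smul_mem₀ ht.ne', mem_ofPred_eq, mem_ofPred_eq, inner_smul_right,
    inv_mul_le_iff₀ ht]

lemma smul_inter_le_inner {t : ℝ} (ht : 0 < t) (K : Set V) (u : V) (c : ℝ) :
    t • K ∩ {x | t * c ≤ ⟪u, x⟫_ℝ} = t • (K ∩ {x | c ≤ ⟪u, x⟫_ℝ}) := by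
  simpa only [inner_neg_left, mul_neg, neg_le_neg_iff] using smul_inter_inner_le ht K (-u) (-c)

lemma IsDissectionAdditive.smul_sub_mul (hσ : IsDissectionAdditive σ) {t : ℝ} (ht : 0 < t) :
    IsDissectionAdditive fun K => σ (t • K) - t * σ K where
  empty := by simp [hσ.empty]
  flat u c K hK hu hc := by
    have hflat : σ (t • K) = 0 := by
      refine hσ.flat u (t * c) _ (hK.smul t) hu ?_
      rintro _ ⟨x, hx, rfl⟩
      rw [inner_smul_right, hc x hx]
    rw [hflat, hσ.flat u c K hK hu hc, mul_zero, sub_zero]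
  cut u c K hK hu := by
    rw [hσ.cut u c K hK hu, hσ.cut u (t * c) _ (hK.smul t) hu, smul_inter_inner_le ht,
      smul_inter_le_inner ht]
    ring

lemma IsContinuousFromAbove.smul_sub_mul (hσ : IsContinuousFromAbove σ) {t : ℝ} (ht : 0 < t) :
    IsContinuousFromAbove fun K => σ (t • K) - t * σ K := by
  intro K hK hanti
  have hinter : t • (⋂ i, K i) = ⋂ i, t • K i := by
    ext x
    simp only [mem_smul_set_iff_inv_smul_mem₀ ht.ne', mem_iInter]
  simp only [hinter]
  exact (hσ _ (fun i => (hK i).smul t) fun i j hij => smul_set_mono (hanti hij)).sub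
    ((hσ K hK hanti).const_mul t)

lemma pathSimplex_subset_span (w : ℕ → V) (i : ℕ) (m : ℝ) :
    pathSimplex w i m ⊆ Submodule.span ℝ (w '' Iio i) := by
  rintro _ ⟨x, -, rfl⟩
  rw [pathMap_apply]
  exact Submodule.sum_mem _ fun j hj => Submodule.smul_mem _ _ <|
    Submodule.subset_span ⟨j, Finset.mem_range.1 hj, rfl⟩

lemma finrank_span_image_Iio_le (w : ℕ → V) (i : ℕ) :
    finrank ℝ (Submodule.span ℝ (w '' Iio i)) ≤ i := by
  classical
  rw [← Finset.coe_range, ← Finset.coe_image]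
  calc _ ≤ ((Finset.range i).image w).card := finrank_span_finset_le_card _
    _ ≤ (Finset.range i).card := Finset.card_image_le
    _ = i := Finset.card_range i

namespace IsOrthogonalPath

variable {w : ℕ → V} {n i : ℕ}

lemma shift (hw : IsOrthogonalPath w n) (i : ℕ) :
    IsOrthogonalPath (fun j => w (i + j)) (n - i) :=
  ⟨fun j hj => hw.1 _ (by lia), fun j hj k hk hjk => hw.2 _ (by lia) _ (by lia) (by lia)⟩

lemma pathSimplex_shift_subset_orthogonal (hw : IsOrthogonalPath w n) (s : ℝ) :
    pathSimplex (fun j => w (i + j)) (n - i) s ⊆ (Submodule.span ℝ (w '' Iio i))ᗮ := by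
  refine (pathSimplex_subset_span (V := V) _ _ s).trans (SetLike.coe_subset_coe.2 ?_)
  refine (Submodule.isOrtho_span (𝕜 := ℝ) (E := V)).2 ?_
  rintro _ ⟨j, hj, rfl⟩ _ ⟨k, hk, rfl⟩
  simp only [mem_Iio] at hj hk
  exact hw.2 (i + j) (by lia) k (by lia) (by lia)

lemma inner_pathMap (hw : IsOrthogonalPath w n) (hi : i < n) (x : ℕ → ℝ) :
    ⟪w i, pathMap w n x⟫_ℝ = x i * ⟪w i, w i⟫_ℝ := by
  rw [pathMap_apply, inner_sum, Finset.sum_eq_single_of_mem i (Finset.mem_range.2 hi),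
    inner_smul_right]
  intro j hj hji
  rw [inner_smul_right, hw.2 i hi j (Finset.mem_range.1 hj) hji.symm, mul_zero]

lemma inner_eq_zero_of_mem_pathSimplex (hw : IsOrthogonalPath w n) (hi : i < n) {m : ℝ} {x : V}
    (hx : x ∈ pathSimplex w i m) : ⟪w i, x⟫_ℝ = 0 := by
  obtain ⟨y, -, rfl⟩ := hx
  rw [pathMap_apply, inner_sum]
  refine Finset.sum_eq_zero fun j hj => ?_
  have hji := Finset.mem_range.1 hj
  rw [inner_smul_right, hw.2 i hi j (hji.trans hi) hji.ne', mul_zero]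

end IsOrthogonalPath

namespace IsInvariantSimpleValuation

variable [FiniteDimensional ℝ V]

lemma pathSimplex_eq_zero_of_lt_finrank (hσ : IsInvariantSimpleValuation σ) (w : ℕ → V) {i : ℕ}
    (hi : i < finrank ℝ V) (m : ℝ) : σ (pathSimplex w i m) = 0 := by
  have hE : Submodule.span ℝ (w '' Iio i) ≠ ⊤ := fun h =>
    (finrank_span_image_Iio_le w i).not_gt (by rwa [h, finrank_top])
  obtain ⟨u, hu, hu0⟩ := Submodule.exists_mem_ne_zero_of_ne_bot
    (mt Submodule.orthogonal_eq_bot_iff.1 hE)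
  exact hσ.flat u 0 _ (isCompactConvex_pathSimplex w i m) hu0 fun x hx =>
    Submodule.inner_left_of_mem_orthogonal (pathSimplex_subset_span w i m hx) hu

lemma pathSimplex_add_shift_eq_zero (hσ : IsInvariantSimpleValuation σ)
    (hcube : VanishesOnUnitCubes σ)
    (hdet : ∀ E : Submodule ℝ V, finrank ℝ E < finrank ℝ V → UnitCubesDetermine E) {w : ℕ → V}
    (hw : IsOrthogonalPath w (finrank ℝ V)) {i : ℕ} (hi0 : 0 < i) (hi : i < finrank ℝ V) (r s : ℝ) :
    σ (pathSimplex w i r + pathSimplex (fun j => w (i + j)) (finrank ℝ V - i) s) = 0 := by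
  set E := Submodule.span ℝ (w '' Iio i)
  have hE : Eᗮ ≠ ⊤ := by
    intro h
    rw [Submodule.orthogonal_eq_top_iff] at h
    have hw0 : w 0 ∈ E := Submodule.subset_span ⟨0, hi0, rfl⟩
    exact hw.1 0 (hi0.trans hi) (by rwa [h, Submodule.mem_bot] at hw0)
  exact hσ.add_eq_zero_of_subset_orthogonal hcube
    (hdet E ((finrank_span_image_Iio_le w i).trans_lt hi)) (hdet Eᗮ (Submodule.finrank_lt hE))
    (isCompactConvex_pathSimplex w i r) (pathSimplex_subset_span w i r)
    (isCompactConvex_pathSimplex _ _ s) (hw.pathSimplex_shift_subset_orthogonal s)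

lemma orthoscheme_size_add (hσ : IsInvariantSimpleValuation σ) (hcube : VanishesOnUnitCubes σ)
    (hdet : ∀ E : Submodule ℝ V, finrank ℝ E < finrank ℝ V → UnitCubesDetermine E) {w : ℕ → V}
    (hw : IsOrthogonalPath w (finrank ℝ V)) (hn : 0 < finrank ℝ V) {r s : ℝ} (hr : 0 ≤ r)
    (hs : 0 ≤ s) : σ (pathSimplex w (finrank ℝ V) (r + s)) =
      σ (pathSimplex w (finrank ℝ V) r) + σ (pathSimplex w (finrank ℝ V) s) := by
  set n := finrank ℝ V
  have hface {i : ℕ} (hi : i < n) : σ (pathSimplex w i r +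
      pathMap (fun j => w (i + j)) (n - i) '' (descendingSeq s ∩ {z | z 0 = s})) = 0 := by
    refine hσ.flat (w i) (s * ⟪w i, w i⟫_ℝ) _ ((isCompactConvex_pathSimplex w i r).add
      (((isCompactConvex_descendingSeq s).inter_eq (.proj 0) s).image _)) (hw.1 i hi) ?_
    rintro _ ⟨x, hx, _, ⟨z, ⟨-, hz⟩, rfl⟩, rfl⟩
    rw [inner_add_right, hw.inner_eq_zero_of_mem_pathSimplex hi hx, zero_add]
    exact ((hw.shift i).inner_pathMap (Nat.sub_pos_of_lt hi) z).trans (by rw [hz]; rfl)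
  have hsum := hσ.pathSimplex_add_size_add (w := w) (d := n) hr hs (.singleton 0)
  simp only [singleton_zero, add_zero] at hsum
  rw [hsum, Finset.sum_eq_single_of_mem 0 (Finset.mem_range.2 hn), hface hn, sub_zero,
    pathSimplex_zero_left w hr, singleton_zero, zero_add]
  · simp only [zero_add, Nat.sub_zero]
  · intro i hi hi0
    have hi : i < n := Finset.mem_range.1 hi
    rw [hface hi, sub_zero,
      hσ.pathSimplex_add_shift_eq_zero hcube hdet hw (Nat.pos_of_ne_zero hi0) hi]

/-- The defect `σ (t • K) - t * σ K` is again additive under dissection, and vanishes on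
orthoschemes. -/
theorem isPosHomogeneous (hσ : IsInvariantSimpleValuation σ) (hcube : VanishesOnUnitCubes σ)
    (hdet : ∀ E : Submodule ℝ V, finrank ℝ E < finrank ℝ V → UnitCubesDetermine E)
    (hn : 0 < finrank ℝ V) : IsPosHomogeneous σ := by
  intro t ht K hK
  refine sub_eq_zero.1 ((hσ.isDissectionAdditive.smul_sub_mul ht).eq_zero_of_pathSimplex_eq_zero
    (hσ.continuousFromAbove.smul_sub_mul ht) (fun w hw => sub_eq_zero.2 ?_) hK)
  rw [← pathSimplex_eq_smul w _ ht.le]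
  refine eq_mul_of_additive_of_tendsto (f := fun m => σ (pathSimplex w (finrank ℝ V) m))
    (fun r s hr hs => hσ.orthoscheme_size_add hcube hdet hw hn hr hs)
    (fun m hm u hu hum => ?_) ht.le
  have hlim := hσ.continuousFromAbove.tendsto_smul_add
    (isCompactConvex_pathSimplex w _ 1) (.singleton 0)
    (zero_mem_pathSimplex w (finrank ℝ V) zero_le_one) hm hu hum
  simpa only [singleton_zero, add_zero, ← pathSimplex_eq_smul w _ hm,
    ← pathSimplex_eq_smul w _ (hm.trans (hu.le_of_tendsto hum _))] using hlim

end IsInvariantSimpleValuation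

end Homogeneity

section Minkowski

variable {V : Type*} [NormedAddCommGroup V] [InnerProductSpace ℝ V] {σ : Set V → ℝ}

/-- A convex body `M` such that `σ` is additive on Minkowski sums with `M`. -/
structure IsMinkowskiAdditive (σ : Set V → ℝ) (M : Set V) : Prop where
  isCompactConvex : IsCompactConvex M
  nonempty : M.Nonempty
  add_eq : ∀ ⦃L : Set V⦄, IsCompactConvex L → L.Nonempty → σ (M + L) = σ M + σ L

namespace IsInvariantSimpleValuation

lemma eq_of_natCast_smul_add_of_zero_mem (hσ : IsInvariantSimpleValuation σ)
    (hhom : IsPosHomogeneous σ) {K L : Set V} (hK : IsCompactConvex K) (hL : IsCompactConvex L)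
    (h0 : (0 : V) ∈ L) {c : ℝ} (hc : ∀ n : ℕ, σ ((n : ℝ) • K + L) = σ L + n * c) : c = σ K := by
  have hval (i : ℕ) : σ ((1 / ((i : ℝ) + 1)) • L + K) = 1 / ((i : ℝ) + 1) * σ L + c := by
    have hi : (0 : ℝ) < i + 1 := by positivity
    have hscale : (1 / ((i : ℝ) + 1)) • L + K =
        (1 / ((i : ℝ) + 1)) • (((i + 1 : ℕ) : ℝ) • K + L) := by
      rw [smul_add, smul_smul, Nat.cast_add_one, one_div_mul_cancel hi.ne', one_smul, add_comm]
    rw [hscale, hhom (by positivity) ((hK.smul _).add hL), hc]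
    push_cast
    field_simp
  have hlim := hσ.continuousFromAbove.tendsto_smul_add hL hK h0 le_rfl
    (antitone_nat_of_succ_le fun i => Nat.one_div_le_one_div i.le_succ)
    tendsto_one_div_add_atTop_nhds_zero_nat
  rw [zero_smul_set ⟨0, h0⟩, zero_add] at hlim
  refine tendsto_nhds_unique (Tendsto.congr (fun i => (hval i).symm) ?_) hlim
  simpa using (tendsto_one_div_add_atTop_nhds_zero_nat.mul_const (σ L)).add_const c

lemma eq_of_natCast_smul_add (hσ : IsInvariantSimpleValuation σ) (hhom : IsPosHomogeneous σ)
    {K L : Set V} (hK : IsCompactConvex K) (hL : IsCompactConvex L) (hne : L.Nonempty) {c : ℝ}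
    (hc : ∀ n : ℕ, σ ((n : ℝ) • K + L) = σ L + n * c) : c = σ K := by
  obtain ⟨l, hl⟩ := hne
  refine hσ.eq_of_natCast_smul_add_of_zero_mem hhom hK (.add (.singleton (-l)) hL)
    ⟨-l, rfl, l, hl, neg_add_cancel l⟩ fun n => ?_
  rw [add_left_comm, hσ.translate _ _ ((hK.smul _).add hL), hσ.translate _ _ hL, hc]

variable {w : ℕ → V} {d : ℕ}

/-- When summands of lower-dimensional path simplices do not change `σ`, the increments in
`pathSimplex_add_size_add` do not depend on the size `r`. -/
lemma pathSimplex_natCast_add (hσ : IsInvariantSimpleValuation σ) {L : Set V}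
    (hL : IsCompactConvex L) (hne : L.Nonempty)
    (hlow : ∀ i < d, ∀ m : ℝ, 0 ≤ m → ∀ X : Set V, IsCompactConvex X → X.Nonempty →
      σ (pathSimplex w i m + X) = σ X) (n : ℕ) :
    σ (pathSimplex w d n + L) = σ L + n * (σ (pathSimplex w d 1 + L) - σ L) := by
  have hterm {r : ℝ} (hr : 0 ≤ r) {i : ℕ} (hi : i < d) {S : Set (ℕ → ℝ)} (hS : IsCompactConvex S)
      (hSne : S.Nonempty) :
      σ (pathSimplex w i r + (pathMap (fun j => w (i + j)) (d - i) '' S + L)) =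
        σ (pathMap (fun j => w (i + j)) (d - i) '' S + L) :=
    hlow i hi r hr _ ((hS.image _).add hL) ((hSne.image _).add hne)
  have hface : (descendingSeq 1 ∩ {z | z 0 = 1}).Nonempty :=
    ⟨fun _ => 1, const_mem_descendingSeq zero_le_one le_rfl, rfl⟩
  have hincr {r : ℝ} (hr : 0 ≤ r) : σ (pathSimplex w d (r + 1) + L) - σ (pathSimplex w d r + L) =
      ∑ i ∈ Finset.range d, (σ (pathSimplex (fun j => w (i + j)) (d - i) 1 + L) -
        σ (pathMap (fun j => w (i + j)) (d - i) '' (descendingSeq 1 ∩ {z | z 0 = 1}) + L)) := by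
    rw [hσ.pathSimplex_add_size_add hr zero_le_one hL, add_sub_cancel_left]
    refine Finset.sum_congr rfl fun i hi => ?_
    have hi := Finset.mem_range.1 hi
    exact congrArg₂ (· - ·)
      (hterm hr hi (isCompactConvex_descendingSeq 1) (hface.mono inter_subset_left))
      (hterm hr hi ((isCompactConvex_descendingSeq 1).inter_eq (.proj 0) 1) hface)
  have hzero : pathSimplex w d 0 + L = L := by
    rw [pathSimplex_eq_smul w d le_rfl, zero_smul_set ⟨0, zero_mem_pathSimplex w d zero_le_one⟩,
      zero_add]
  have hfirst := hincr le_rfl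
  rw [zero_add, hzero] at hfirst
  induction n with
  | zero => rw [Nat.cast_zero, hzero, zero_mul, add_zero]
  | succ k ih =>
    have hk := hincr k.cast_nonneg
    push_cast
    linarith

/-- Adding large multiples of a path simplex raises `σ` linearly, with slope identified by
homogeneity; the lower-dimensional pieces contribute nothing by induction. -/
theorem isMinkowskiAdditive_pathSimplex [FiniteDimensional ℝ V] (hσ : IsInvariantSimpleValuation σ)
    (hhom : IsPosHomogeneous σ) (w : ℕ → V) (hd : d ≤ finrank ℝ V) :
    IsMinkowskiAdditive σ (pathSimplex w d 1) := by
  induction d using Nat.strong_induction_on generalizing w with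
  | _ d ih =>
  refine ⟨isCompactConvex_pathSimplex w d 1, ⟨0, zero_mem_pathSimplex w d zero_le_one⟩,
    fun L hL hne => ?_⟩
  have hlow (i : ℕ) (hi : i < d) (m : ℝ) (hm : 0 ≤ m) (X : Set V) (hX : IsCompactConvex X)
      (hXne : X.Nonempty) : σ (pathSimplex w i m + X) = σ X := by
    have hadd := (ih i hi (fun j => m • w j) (hi.le.trans hd)).add_eq hX hXne
    rwa [pathSimplex_smul w i hm, hσ.pathSimplex_eq_zero_of_lt_finrank w (hi.trans_le hd),
      zero_add] at hadd
  have hslope := hσ.eq_of_natCast_smul_add hhom (isCompactConvex_pathSimplex w d 1) hL hne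
    fun n => by
      rw [← pathSimplex_eq_smul w d n.cast_nonneg]
      exact hσ.pathSimplex_natCast_add hL hne hlow n
  linarith

end IsInvariantSimpleValuation

end Minkowski

section Rounding

variable {V : Type*} [NormedAddCommGroup V] [InnerProductSpace ℝ V] {σ : Set V → ℝ} {M N : Set V}

namespace IsMinkowskiAdditive

lemma add (hM : IsMinkowskiAdditive σ M) (hN : IsMinkowskiAdditive σ N) :
    IsMinkowskiAdditive σ (M + N) where
  isCompactConvex := hM.isCompactConvex.add hN.isCompactConvex
  nonempty := hM.nonempty.add hN.nonempty
  add_eq L hL hne := by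
    rw [add_assoc, hM.add_eq (hN.isCompactConvex.add hL) (hN.nonempty.add hne), hN.add_eq hL hne,
      hM.add_eq hN.isCompactConvex hN.nonempty, add_assoc]

lemma sum (h0 : σ 0 = 0) {ι : Type*} {K : ι → Set V} (F : Finset ι)
    (hK : ∀ i ∈ F, IsMinkowskiAdditive σ (K i)) :
    IsMinkowskiAdditive σ (∑ i ∈ F, K i) ∧ σ (∑ i ∈ F, K i) = ∑ i ∈ F, σ (K i) := by
  classical
  induction F using Finset.induction_on with
  | empty =>
    simp only [Finset.sum_empty]
    exact ⟨⟨.singleton 0, zero_nonempty, fun L _ _ => by rw [zero_add, h0, zero_add]⟩, h0⟩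
  | insert i F hi ih =>
    obtain ⟨hadd, hval⟩ := ih fun j hj => hK j (Finset.mem_insert_of_mem hj)
    have hKi := hK i (Finset.mem_insert_self i F)
    rw [Finset.sum_insert hi, Finset.sum_insert hi, ← hval]
    exact ⟨hKi.add hadd, hKi.add_eq hadd.isCompactConvex hadd.nonempty⟩

lemma smul (hhom : IsPosHomogeneous σ) (hM : IsMinkowskiAdditive σ M) {t : ℝ} (ht : 0 < t) :
    IsMinkowskiAdditive σ (t • M) where
  isCompactConvex := hM.isCompactConvex.smul t
  nonempty := hM.nonempty.smul_set
  add_eq L hL hne := by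
    have hscale : t • M + L = t • (M + t⁻¹ • L) := by
      rw [smul_add, smul_smul, mul_inv_cancel₀ ht.ne', one_smul]
    rw [hscale, hhom ht (hM.isCompactConvex.add (hL.smul _)),
      hM.add_eq (hL.smul _) hne.smul_set, hhom (inv_pos.2 ht) hL, hhom ht hM.isCompactConvex]
    field_simp

lemma reflect (hσ : IsInvariantSimpleValuation σ) (hM : IsMinkowskiAdditive σ M) (u : V) :
    IsMinkowskiAdditive σ ((ℝ ∙ u)ᗮ.reflection '' M) where
  isCompactConvex :=
    hM.isCompactConvex.image ((ℝ ∙ u)ᗮ.reflection.toContinuousLinearEquiv : V →L[ℝ] V)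
  nonempty := hM.nonempty.image _
  add_eq L hL hne := by
    have hL' : IsCompactConvex ((ℝ ∙ u)ᗮ.reflection '' L) :=
      hL.image ((ℝ ∙ u)ᗮ.reflection.toContinuousLinearEquiv : V →L[ℝ] V)
    have hconj : (ℝ ∙ u)ᗮ.reflection '' M + L =
        (ℝ ∙ u)ᗮ.reflection '' (M + (ℝ ∙ u)ᗮ.reflection '' L) := by
      simp only [image_add, image_image, Submodule.reflection_reflection, image_id']
    rw [hconj, hσ.reflect u _ (hM.isCompactConvex.add hL'), hM.add_eq hL' (hne.image _),
      hσ.reflect u L hL, hσ.reflect u M hM.isCompactConvex]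

end IsMinkowskiAdditive

/-- The Minkowski average of the images of `M` under the reflections taking the unit vector `u` to
the unit vectors in `F`. Averaging spreads a bound on `M` in direction `u` over all directions. -/
def reflectionAverage (F : Finset V) (u : V) (M : Set V) : Set V :=
  (F.card : ℝ)⁻¹ • ∑ v ∈ F, (ℝ ∙ (u - v))ᗮ.reflection '' M

lemma isMinkowskiAdditive_reflectionAverage (hσ : IsInvariantSimpleValuation σ) (h0 : σ 0 = 0)
    (hhom : IsPosHomogeneous σ) (hM : IsMinkowskiAdditive σ M) {F : Finset V} (hF : F.Nonempty)
    (u : V) : IsMinkowskiAdditive σ (reflectionAverage F u M) ∧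
      σ (reflectionAverage F u M) = σ M := by
  have hcard : (0 : ℝ) < F.card := Nat.cast_pos.2 hF.card_pos
  obtain ⟨hadd, hval⟩ := IsMinkowskiAdditive.sum h0 F fun v _ => hM.reflect hσ (u - v)
  refine ⟨hadd.smul hhom (inv_pos.2 hcard), ?_⟩
  simp only [hσ.reflect _ M hM.isCompactConvex, Finset.sum_const, nsmul_eq_mul] at hval
  rw [reflectionAverage, hhom (inv_pos.2 hcard) hadd.isCompactConvex, hval,
    inv_mul_cancel_left₀ hcard.ne']

lemma closedBall_subset_reflectionAverage {r : ℝ} (hM : Metric.closedBall 0 r ⊆ M) {F : Finset V}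
    (hF : F.Nonempty) (u : V) : Metric.closedBall 0 r ⊆ reflectionAverage F u M := by
  intro x hx
  refine ⟨∑ _v ∈ F, x, (mem_finsetSum _ _ _).2 ⟨fun _ => x, fun {v} _ => ?_, rfl⟩, ?_⟩
  · refine ⟨(ℝ ∙ (u - v))ᗮ.reflection x, hM ?_, Submodule.reflection_reflection _ x⟩
    simpa using hx
  · have hcard : (F.card : ℝ) ≠ 0 := Nat.cast_ne_zero.2 hF.card_ne_zero
    simp only [Finset.sum_const, ← Nat.cast_smul_eq_nsmul ℝ, inv_smul_smul₀ hcard]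

lemma inner_le_of_mem_image_reflection {u v : V} (huv : ‖u‖ = ‖v‖) {c : ℝ}
    (hc : ∀ x ∈ M, ⟪u, x⟫_ℝ ≤ c) {y : V} (hy : y ∈ (ℝ ∙ (u - v))ᗮ.reflection '' M) :
    ⟪v, y⟫_ℝ ≤ c := by
  obtain ⟨x, hx, rfl⟩ := hy
  have hv := Submodule.reflection_sub huv
  calc ⟪v, (ℝ ∙ (u - v))ᗮ.reflection x⟫_ℝ
      = ⟪(ℝ ∙ (u - v))ᗮ.reflection u, (ℝ ∙ (u - v))ᗮ.reflection x⟫_ℝ := by rw [hv]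
    _ = ⟪u, x⟫_ℝ := LinearIsometryEquiv.inner_map_map _ u x
    _ ≤ c := hc x hx

lemma exists_norm_eq_one_inner_eq_norm [Nontrivial V] (z : V) :
    ∃ v : V, ‖v‖ = 1 ∧ ⟪v, z⟫_ℝ = ‖z‖ := by
  rcases eq_or_ne z 0 with rfl | hz
  · obtain ⟨v, hv⟩ := exists_norm_eq V zero_le_one
    exact ⟨v, hv, by simp⟩
  · have hnorm : ‖z‖ ≠ 0 := norm_ne_zero_iff.2 hz
    refine ⟨‖z‖⁻¹ • z, norm_smul_inv_norm hz, ?_⟩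
    rw [real_inner_smul_left, real_inner_self_eq_norm_mul_norm, inv_mul_cancel_left₀ hnorm]

/-- In a direction `x`, the summand of the average reflected towards a net point near `x` gains
over the trivial bound `ρ`. -/
lemma reflectionAverage_subset_closedBall [Nontrivial V] {F : Finset V} (hF : ∀ v ∈ F, ‖v‖ = 1)
    {η ρ c : ℝ} (hnet : ∀ x : V, ‖x‖ = 1 → ∃ v ∈ F, ‖x - v‖ ≤ η)
    (hM : M ⊆ Metric.closedBall 0 ρ) {u : V} (hu : ‖u‖ = 1) (hc : ∀ x ∈ M, ⟪u, x⟫_ℝ ≤ c) :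
    reflectionAverage F u M ⊆ Metric.closedBall 0 (ρ - (ρ - c - η * ρ) / F.card) := by
  classical
  rintro _ ⟨_, hy, rfl⟩
  obtain ⟨g, hg, rfl⟩ := (mem_finsetSum _ _ _).1 hy
  have hg_norm {v : V} (hv : v ∈ F) : ‖g v‖ ≤ ρ := by
    obtain ⟨x, hx, hgx⟩ := hg hv
    simpa [← hgx] using hM hx
  obtain ⟨x, hx, hxz⟩ := exists_norm_eq_one_inner_eq_norm ((F.card : ℝ)⁻¹ • ∑ v ∈ F, g v)
  obtain ⟨w, hw, hxw⟩ := hnet x hx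
  have hcard : (0 : ℝ) < F.card := Nat.cast_pos.2 (Finset.card_pos.2 ⟨w, hw⟩)
  have hnear : ⟪x, g w⟫_ℝ ≤ c + η * ρ := by
    calc ⟪x, g w⟫_ℝ = ⟪w, g w⟫_ℝ + ⟪x - w, g w⟫_ℝ := by rw [inner_sub_left]; ring
      _ ≤ c + ‖x - w‖ * ‖g w‖ := add_le_add
        (inner_le_of_mem_image_reflection (hu.trans (hF w hw).symm) hc (hg hw))
        (real_inner_le_norm _ _)
      _ ≤ c + η * ρ := by
        gcongr
        exacts [(norm_nonneg _).trans hxw, hg_norm hw]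
  have hfar {v : V} (hv : v ∈ F) : ⟪x, g v⟫_ℝ ≤ ρ :=
    (real_inner_le_norm x (g v)).trans (by rw [hx, one_mul]; exact hg_norm hv)
  rw [mem_closedBall_zero_iff]
  beta_reduce
  rw [← hxz, real_inner_smul_right, inner_sum, inv_mul_le_iff₀ hcard]
  calc ∑ v ∈ F, ⟪x, g v⟫_ℝ = ⟪x, g w⟫_ℝ + ∑ v ∈ F.erase w, ⟪x, g v⟫_ℝ :=
        (Finset.add_sum_erase F _ hw).symm
    _ ≤ (c + η * ρ) + (F.erase w).card • ρ := add_le_add hnear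
        (Finset.sum_le_card_nsmul _ _ _ fun v hv => hfar (Finset.mem_of_mem_erase hv))
    _ = F.card * (ρ - (ρ - c - η * ρ) / F.card) := by
        rw [Finset.card_erase_of_mem hw, nsmul_eq_mul,
          Nat.cast_pred (Finset.card_pos.2 ⟨w, hw⟩)]
        field_simp
        ring

lemma exists_finset_forall_norm_sub_le [FiniteDimensional ℝ V] {η : ℝ} (hη : 0 < η) :
    ∃ F : Finset V, (∀ v ∈ F, ‖v‖ = 1) ∧ ∀ x : V, ‖x‖ = 1 → ∃ v ∈ F, ‖x - v‖ ≤ η := by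
  have := FiniteDimensional.proper_real V
  obtain ⟨t, ht, hfin, hcover⟩ := (isCompact_sphere (0 : V) 1).finite_cover_balls hη
  refine ⟨hfin.toFinset, fun v hv => mem_sphere_zero_iff_norm.1 (ht (hfin.mem_toFinset.1 hv)),
    fun x hx => ?_⟩
  obtain ⟨v, hv, hxv⟩ := mem_iUnion₂.1 (hcover (mem_sphere_zero_iff_norm.2 hx))
  exact ⟨v, hfin.mem_toFinset.2 hv, (mem_ball_iff_norm.1 hxv).le⟩

lemma exists_norm_eq_one_forall_inner_le [CompleteSpace V] (hM : IsCompactConvex M)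
    (h0 : (0 : V) ∈ M) {r : ℝ} (hr : ¬ Metric.closedBall 0 r ⊆ M) :
    ∃ u : V, ‖u‖ = 1 ∧ ∀ x ∈ M, ⟪u, x⟫_ℝ ≤ r := by
  obtain ⟨x, hx, hxM⟩ := not_subset.1 hr
  obtain ⟨f, c, hfM, hfx⟩ := geometric_hahn_banach_closed_point hM.2 hM.1.isClosed hxM
  obtain ⟨u, rfl⟩ := (InnerProductSpace.toDual ℝ V).surjective f
  simp only [InnerProductSpace.toDual_apply_apply] at hfM hfx
  have hc : 0 < c := by simpa using hfM 0 h0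
  have hu : u ≠ 0 := by
    rintro rfl
    exact (hc.trans hfx).ne' (inner_zero_left x)
  refine ⟨‖u‖⁻¹ • u, norm_smul_inv_norm hu, fun y hy => ?_⟩
  rw [real_inner_smul_left, inv_mul_le_iff₀ (norm_pos_iff.2 hu)]
  calc ⟪u, y⟫_ℝ ≤ ⟪u, x⟫_ℝ := ((hfM y hy).trans hfx).le
    _ ≤ ‖u‖ * ‖x‖ := real_inner_le_norm u x
    _ ≤ ‖u‖ * r := by gcongr; simpa using hx

end Rounding

section Ball

variable {V : Type*} [NormedAddCommGroup V] [InnerProductSpace ℝ V] {σ : Set V → ℝ} {M Z : Set V}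

/-- The radii of balls about the origin containing some Minkowski additive set of value `a` that
contains the unit ball; their infimum is the radius of the ball approached by repeated averaging. -/
def additiveRadii (σ : Set V → ℝ) (a : ℝ) : Set ℝ :=
  {ρ | ∃ M, IsMinkowskiAdditive σ M ∧ σ M = a ∧ Metric.closedBall 0 1 ⊆ M ∧
    M ⊆ Metric.closedBall 0 ρ}

lemma one_le_of_mem_additiveRadii [Nontrivial V] {a ρ : ℝ} (hρ : ρ ∈ additiveRadii σ a) :
    1 ≤ ρ := by
  obtain ⟨M, -, -, hball, hM⟩ := hρ
  obtain ⟨x, hx⟩ := exists_norm_eq V zero_le_one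
  simpa [hx] using hM (hball (mem_closedBall_zero_iff.2 hx.le))

lemma IsMinkowskiAdditive.nonempty_additiveRadii (hM : IsMinkowskiAdditive σ M)
    (hball : Metric.closedBall 0 1 ⊆ M) : (additiveRadii σ (σ M)).Nonempty := by
  obtain ⟨ρ, hρ⟩ := hM.isCompactConvex.1.isBounded.subset_closedBall 0
  exact ⟨ρ, M, hM, rfl, hball, hρ⟩

variable [FiniteDimensional ℝ V]

lemma closedBall_subset_add_smul (hZ : Metric.closedBall 0 1 ⊆ Z) {p q : ℝ} (hp : 0 ≤ p)
    (hpq : p ≤ q) (hM : Metric.closedBall 0 p ⊆ M) :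
    Metric.closedBall 0 q ⊆ M + (q - p) • Z := by
  have := FiniteDimensional.proper_real V
  calc Metric.closedBall (0 : V) q = Metric.closedBall 0 p + Metric.closedBall 0 (q - p) := by
        rw [closedBall_add_closedBall hp (sub_nonneg.2 hpq), add_zero, add_sub_cancel]
    _ ⊆ M + (q - p) • Z := by
        rw [← smul_unitClosedBall_of_nonneg (sub_nonneg.2 hpq)]
        exact add_subset_add hM (smul_set_mono hZ)

lemma antitone_add_smul (hZ : Convex ℝ Z) (hball : Metric.closedBall 0 1 ⊆ Z) {R : ℝ} (hR : 1 ≤ R)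
    {M : ℕ → Set V} (hlow : ∀ j, Metric.closedBall 0 (R - 2⁻¹ ^ j) ⊆ M j)
    (hup : ∀ j, M j ⊆ Metric.closedBall 0 (R + 2⁻¹ ^ j)) :
    Antitone fun j : ℕ => M j + (4 * 2⁻¹ ^ j : ℝ) • Z := by
  refine antitone_nat_of_succ_le fun j => ?_
  have hpos : (0 : ℝ) < 2⁻¹ ^ j := by positivity
  have hle : (2⁻¹ ^ j : ℝ) ≤ 1 := pow_le_one₀ (by norm_num) (by norm_num)
  have hsucc : (2⁻¹ ^ (j + 1) : ℝ) = 2⁻¹ ^ j / 2 := by rw [pow_succ]; ring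
  have hstep : M (j + 1) ⊆ M j + (R + 2⁻¹ ^ (j + 1) - (R - 2⁻¹ ^ j)) • Z :=
    (hup (j + 1)).trans
      (closedBall_subset_add_smul hball (by linarith) (by linarith) (hlow j))
  have h0 : (0 : V) ∈ Z := hball (Metric.mem_closedBall_self zero_le_one)
  calc M (j + 1) + (4 * 2⁻¹ ^ (j + 1) : ℝ) • Z
      ⊆ M j + (R + 2⁻¹ ^ (j + 1) - (R - 2⁻¹ ^ j)) • Z + (4 * 2⁻¹ ^ (j + 1) : ℝ) • Z :=
        add_subset_add_right hstep
    _ = M j + (R + 2⁻¹ ^ (j + 1) - (R - 2⁻¹ ^ j) + 4 * 2⁻¹ ^ (j + 1)) • Z := by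
        rw [add_assoc, ← hZ.add_smul (by linarith) (by positivity)]
    _ ⊆ M j + (4 * 2⁻¹ ^ j : ℝ) • Z :=
        add_subset_add_left (smul_subset_smul_of_zero_mem hZ h0 (by linarith) (by linarith))

/-- The summands `4 * 2⁻¹ ^ j • Z` make the sequence decreasing, since they absorb the distance
between `M (j + 1)` and `M j`. -/
lemma IsContinuousFromAbove.tendsto_add_smul_closedBall (hσ : IsContinuousFromAbove σ)
    (hZ : IsCompactConvex Z) (hball : Metric.closedBall 0 1 ⊆ Z) {R : ℝ} (hR : 1 ≤ R)
    {M : ℕ → Set V} (hM : ∀ j, IsCompactConvex (M j))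
    (hlow : ∀ j, Metric.closedBall 0 (R - 2⁻¹ ^ j) ⊆ M j)
    (hup : ∀ j, M j ⊆ Metric.closedBall 0 (R + 2⁻¹ ^ j)) :
    Tendsto (fun j : ℕ => σ (M j + (4 * 2⁻¹ ^ j : ℝ) • Z)) atTop
      (𝓝 (σ (Metric.closedBall 0 R))) := by
  have := FiniteDimensional.proper_real V
  obtain ⟨C, hC⟩ := hZ.1.isBounded.subset_closedBall 0
  have h0 : (0 : V) ∈ Z := hball (Metric.mem_closedBall_self zero_le_one)
  have hC0 : 0 ≤ C := Metric.nonempty_closedBall.1 ⟨0, hC h0⟩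
  have hle (j : ℕ) : (2⁻¹ ^ j : ℝ) ≤ 1 := pow_le_one₀ (by norm_num) (by norm_num)
  have hlim : Tendsto (fun j : ℕ => (2⁻¹ ^ j : ℝ)) atTop (𝓝 0) :=
    tendsto_pow_atTop_nhds_zero_of_lt_one (by norm_num) (by norm_num)
  refine hσ.tendsto_of_subset_add_closedBall (ε := fun j => 2⁻¹ ^ j + 4 * 2⁻¹ ^ j * C)
    (fun j => (hM j).add (hZ.smul _)) (antitone_add_smul hZ.2 hball hR hlow hup)
    Metric.isClosed_closedBall (fun j => ?_)
    (by simpa using hlim.add ((hlim.const_mul 4).mul_const C)) fun j => ?_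
  · have hpos : (0 : ℝ) < 2⁻¹ ^ j := by positivity
    calc Metric.closedBall 0 R ⊆ M j + (R - (R - 2⁻¹ ^ j)) • Z :=
          closedBall_subset_add_smul hball (by linarith [hle j]) (by linarith) (hlow j)
      _ ⊆ M j + (4 * 2⁻¹ ^ j : ℝ) • Z := add_subset_add_left
          (smul_subset_smul_of_zero_mem hZ.2 h0 (by linarith) (by linarith))
  · calc M j + (4 * 2⁻¹ ^ j : ℝ) • Z
        ⊆ Metric.closedBall 0 (R + 2⁻¹ ^ j) + (4 * 2⁻¹ ^ j : ℝ) • Metric.closedBall 0 C :=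
          add_subset_add (hup j) (smul_set_mono hC)
      _ = Metric.closedBall 0 R + Metric.closedBall 0 (2⁻¹ ^ j + 4 * 2⁻¹ ^ j * C) := by
          rw [_root_.smul_closedBall _ _ hC0, smul_zero, Real.norm_of_nonneg (by positivity),
            closedBall_add_closedBall (by positivity) (by positivity),
            closedBall_add_closedBall (by positivity) (by positivity), add_assoc]

variable [Nontrivial V]

lemma sub_div_card_mem_additiveRadii (hσ : IsInvariantSimpleValuation σ)
    (hhom : IsPosHomogeneous σ) (hM : IsMinkowskiAdditive σ M) (hball : Metric.closedBall 0 1 ⊆ M)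
    {F : Finset V} (hF : F.Nonempty) (hF1 : ∀ v ∈ F, ‖v‖ = 1) {η ρ c : ℝ}
    (hnet : ∀ x : V, ‖x‖ = 1 → ∃ v ∈ F, ‖x - v‖ ≤ η) (hρ : M ⊆ Metric.closedBall 0 ρ)
    (hc : ¬ Metric.closedBall 0 c ⊆ M) :
    ρ - (ρ - c - η * ρ) / F.card ∈ additiveRadii σ (σ M) := by
  obtain ⟨u, hu, hMu⟩ := exists_norm_eq_one_forall_inner_le hM.isCompactConvex
    (hball (Metric.mem_closedBall_self zero_le_one)) hc
  obtain ⟨hadd, hval⟩ := isMinkowskiAdditive_reflectionAverage hσ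
    (hσ.isDissectionAdditive.singleton 0) hhom hM hF u
  exact ⟨_, hadd, hval, closedBall_subset_reflectionAverage hball hF u,
    reflectionAverage_subset_closedBall hF1 hnet hρ hu hMu⟩

/-- A set nearly attaining the infimum of the radii contains nearly the whole ball of that radius,
since otherwise averaging it would lower the radius below the infimum. -/
lemma exists_between_closedBalls (hσ : IsInvariantSimpleValuation σ) (hhom : IsPosHomogeneous σ)
    (hM : IsMinkowskiAdditive σ M) (hball : Metric.closedBall 0 1 ⊆ M) :
    ∃ R, 1 ≤ R ∧ ∀ ε, 0 < ε → ε ≤ 1 → ∃ N, IsMinkowskiAdditive σ N ∧ σ N = σ M ∧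
      Metric.closedBall 0 (R - ε) ⊆ N ∧ N ⊆ Metric.closedBall 0 (R + ε) := by
  have hne : (additiveRadii σ (σ M)).Nonempty := hM.nonempty_additiveRadii hball
  have hone : 1 ∈ lowerBounds (additiveRadii σ (σ M)) := fun _ h => one_le_of_mem_additiveRadii h
  set R := sInf (additiveRadii σ (σ M))
  have hR1 : 1 ≤ R := le_csInf hne hone
  refine ⟨R, hR1, fun ε hε hε1 => ?_⟩
  obtain ⟨F, hF1, hnet⟩ := exists_finset_forall_norm_sub_le (V := V)
    (show 0 < ε / (2 * (R + 1)) by positivity)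
  have hF : F.Nonempty := by
    obtain ⟨z, hz⟩ := exists_norm_eq V zero_le_one
    exact (hnet z hz).imp fun _ => And.left
  have hcard : (1 : ℝ) ≤ F.card := Nat.one_le_cast.2 hF.card_pos
  have hgain : ε / 2 / F.card ≤ ε / 2 := div_le_self (by positivity) hcard
  obtain ⟨ρ, hρ, hρR⟩ := exists_lt_of_csInf_lt hne
    (lt_add_of_pos_right R (show 0 < ε / 2 / F.card by positivity))
  have hRρ : R ≤ ρ := csInf_le ⟨1, hone⟩ hρ
  obtain ⟨N, hN, hval, hNball, hNρ⟩ := hρ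
  refine ⟨N, hN, hval, ?_, hNρ.trans (Metric.closedBall_subset_closedBall (by linarith))⟩
  by_contra hmiss
  have hsmaller : R ≤ ρ - (ρ - (R - ε) - ε / (2 * (R + 1)) * ρ) / F.card := by
    refine csInf_le ⟨1, hone⟩ (hval ▸ ?_)
    exact sub_div_card_mem_additiveRadii hσ hhom hN hNball hF hF1 hnet hNρ hmiss
  have hη : ε / (2 * (R + 1)) * ρ ≤ ε / 2 := by
    calc ε / (2 * (R + 1)) * ρ ≤ ε / (2 * (R + 1)) * (R + 1) := by gcongr; linarith
      _ = ε / 2 := by field_simp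
  have hdrop : ε / 2 / F.card ≤ (ρ - (R - ε) - ε / (2 * (R + 1)) * ρ) / F.card := by
    gcongr
    linarith
  linarith

theorem exists_closedBall_eq (hσ : IsInvariantSimpleValuation σ) (hhom : IsPosHomogeneous σ)
    (hZ : IsMinkowskiAdditive σ Z) (hZ0 : σ Z = 0) (hZball : Metric.closedBall 0 1 ⊆ Z)
    (hM : IsMinkowskiAdditive σ M) (hball : Metric.closedBall 0 1 ⊆ M) :
    ∃ R, 1 ≤ R ∧ σ (Metric.closedBall 0 R) = σ M := by
  obtain ⟨R, hR, hround⟩ := exists_between_closedBalls hσ hhom hM hball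
  choose N hN hval hlow hup using fun j : ℕ => hround (2⁻¹ ^ j) (by positivity)
    (pow_le_one₀ (by norm_num) (by norm_num))
  have hlim := hσ.continuousFromAbove.tendsto_add_smul_closedBall hZ.isCompactConvex hZball hR
    (fun j => (hN j).isCompactConvex) hlow hup
  have hconst (j : ℕ) : σ (N j + (4 * 2⁻¹ ^ j : ℝ) • Z) = σ M := by
    rw [(hN j).add_eq (hZ.isCompactConvex.smul _) hZ.nonempty.smul_set,
      hhom (by positivity) hZ.isCompactConvex, hZ0, hval, mul_zero, add_zero]
  simp only [hconst] at hlim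
  exact ⟨R, hR, tendsto_nhds_unique hlim tendsto_const_nhds⟩

/-- Both `σ (M + Z) = σ M` and `σ Z = 0` are values of `σ` on balls, which homogeneity compares. -/
theorem IsMinkowskiAdditive.eq_zero_of_zero_mem (hσ : IsInvariantSimpleValuation σ)
    (hhom : IsPosHomogeneous σ) (hM : IsMinkowskiAdditive σ M) (h0 : (0 : V) ∈ M)
    (hZ : IsMinkowskiAdditive σ Z) (hZ0 : σ Z = 0) (hZball : Metric.closedBall 0 1 ⊆ Z) :
    σ M = 0 := by
  obtain ⟨r, hr, hσr⟩ := exists_closedBall_eq hσ hhom hZ hZ0 hZball hZ hZball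
  obtain ⟨R, hR, hσR⟩ := exists_closedBall_eq hσ hhom hZ hZ0 hZball (hM.add hZ)
    (hZball.trans fun z hz => ⟨0, h0, z, hz, zero_add z⟩)
  have hscale : Metric.closedBall (0 : V) R = (R / r) • Metric.closedBall (0 : V) r := by
    rw [_root_.smul_closedBall _ _ (by linarith), smul_zero, Real.norm_of_nonneg (by positivity),
      div_mul_cancel₀ _ (by linarith)]
  calc σ M = σ (M + Z) := by rw [hM.add_eq hZ.isCompactConvex hZ.nonempty, hZ0, add_zero]
    _ = σ ((R / r) • Metric.closedBall (0 : V) r) := by rw [← hσR, hscale]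
    _ = 0 := by rw [hhom (by positivity) (.closedBall r), hσr, hZ0, mul_zero]

end Ball

section Determination

variable {V : Type*} [NormedAddCommGroup V] [InnerProductSpace ℝ V] {σ : Set V → ℝ}

lemma segment_zero_left_eq_image (e : V) : segment ℝ 0 e = (fun t : ℝ => t • e) '' Icc 0 1 := by
  simp [segment_eq_image']

lemma pathSimplex_const_one (e : V) : pathSimplex (fun _ => e) 1 1 = segment ℝ 0 e := by
  rw [segment_zero_left_eq_image]
  apply Subset.antisymm
  · rintro _ ⟨x, hx, rfl⟩
    exact ⟨x 0, hx.2 0, by simp [pathMap_apply]⟩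
  · rintro _ ⟨t, ht, rfl⟩
    exact ⟨fun _ => t, const_mem_descendingSeq ht.1 ht.2, by simp [pathMap_apply]⟩

lemma closedBall_subset_sum_segment {ι : Type*} [Fintype ι] (b : OrthonormalBasis ι ℝ V) :
    Metric.closedBall 0 1 ⊆ ∑ i, (segment ℝ 0 (b i) + segment ℝ 0 (-b i)) := by
  intro x hx
  refine (mem_finsetSum _ _ _).2 ⟨fun i => ⟪b i, x⟫_ℝ • b i, fun {i} _ => ?_, b.sum_repr' x⟩
  obtain ⟨hge, hle⟩ : -1 ≤ ⟪b i, x⟫_ℝ ∧ ⟪b i, x⟫_ℝ ≤ 1 := by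
    refine abs_le.1 ((abs_real_inner_le_norm (b i) x).trans ?_)
    simpa [b.orthonormal.1 i] using hx
  rw [segment_zero_left_eq_image, segment_zero_left_eq_image]
  refine ⟨_, ⟨max ⟪b i, x⟫_ℝ 0, ⟨le_max_right _ _, max_le hle zero_le_one⟩, rfl⟩,
    _, ⟨max (-⟪b i, x⟫_ℝ) 0, ⟨le_max_right _ _, max_le (neg_le.1 hge) zero_le_one⟩, rfl⟩, ?_⟩
  simp only [smul_neg, ← sub_eq_add_neg, ← sub_smul]
  rw [max_zero_sub_max_neg_zero_eq_self]

lemma unitCubesDetermine_of_subsingleton [Subsingleton V] : UnitCubesDetermine V := by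
  intro σ hσ hcube K _
  rcases K.eq_empty_or_nonempty with rfl | hK
  · exact hσ.empty
  · have : IsEmpty (Fin (finrank ℝ V)) := by
      rw [finrank_zero_of_subsingleton]
      infer_instance
    have hcubeK : parallelepiped (0 : Fin (finrank ℝ V) → V) = K :=
      (Subsingleton.eq_univ_of_nonempty ((nonempty_Icc.2 zero_le_one).image _)).trans
        (Subsingleton.eq_univ_of_nonempty hK).symm
    exact hcubeK ▸ hcube 0 ⟨isEmptyElim, fun i => isEmptyElim i⟩

variable [FiniteDimensional ℝ V] [Nontrivial V]

lemma IsInvariantSimpleValuation.exists_isMinkowskiAdditive_eq_zero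
    (hσ : IsInvariantSimpleValuation σ) (hhom : IsPosHomogeneous σ)
    (hseg : ∀ e : V, ‖e‖ = 1 → σ (segment ℝ 0 e) = 0) :
    ∃ Z, IsMinkowskiAdditive σ Z ∧ σ Z = 0 ∧ Metric.closedBall 0 1 ⊆ Z := by
  have hadd (e : V) : IsMinkowskiAdditive σ (segment ℝ 0 e) :=
    pathSimplex_const_one e ▸ hσ.isMinkowskiAdditive_pathSimplex hhom _ finrank_pos
  let b := stdOrthonormalBasis ℝ V
  obtain ⟨hZ, hval⟩ := IsMinkowskiAdditive.sum (hσ.isDissectionAdditive.singleton 0)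
    Finset.univ fun i _ => (hadd (b i)).add (hadd (-b i))
  refine ⟨_, hZ, hval.trans (Finset.sum_eq_zero fun i _ => ?_), closedBall_subset_sum_segment b⟩
  rw [(hadd (b i)).add_eq (hadd (-b i)).isCompactConvex (hadd (-b i)).nonempty,
    hseg _ (b.orthonormal.1 i), hseg _ ((norm_neg _).trans (b.orthonormal.1 i)), add_zero]

lemma unitCubesDetermine_of_finrank_lt
    (hdet : ∀ E : Submodule ℝ V, finrank ℝ E < finrank ℝ V → UnitCubesDetermine E) :
    UnitCubesDetermine V := by
  intro σ hσ hcube K hK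
  have hhom : IsPosHomogeneous σ := hσ.isPosHomogeneous hcube hdet finrank_pos
  have hseg (e : V) (he : ‖e‖ = 1) : σ (segment ℝ 0 e) = 0 := by
    have he0 : e ≠ 0 := norm_ne_zero_iff.1 (he ▸ one_ne_zero)
    have hlt : finrank ℝ (ℝ ∙ e)ᗮ < finrank ℝ V := by
      have hsum := Submodule.finrank_add_finrank_orthogonal (ℝ ∙ e)
      rw [finrank_span_singleton he0] at hsum
      lia
    simpa using hσ.segment_add_eq_zero hcube he (hdet _ hlt) (.singleton 0) (by simp)
  obtain ⟨Z, hZ, hZ0, hZball⟩ := hσ.exists_isMinkowskiAdditive_eq_zero hhom hseg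
  refine hσ.isDissectionAdditive.eq_zero_of_pathSimplex_eq_zero hσ.continuousFromAbove
    (fun w _ => ?_) hK
  exact (hσ.isMinkowskiAdditive_pathSimplex hhom w le_rfl).eq_zero_of_zero_mem hσ hhom
    (zero_mem_pathSimplex w _ zero_le_one) hZ hZ0 hZball

end Determination

theorem unitCubesDetermine (V : Type*) [NormedAddCommGroup V] [InnerProductSpace ℝ V]
    [FiniteDimensional ℝ V] : UnitCubesDetermine V := by
  induction hn : finrank ℝ V using Nat.strong_induction_on generalizing V with
  | _ n ih =>
  rcases subsingleton_or_nontrivial V with _ | _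
  · exact unitCubesDetermine_of_subsingleton
  · exact unitCubesDetermine_of_finrank_lt fun E hE => ih _ (hn ▸ hE) E rfl

section Volume

variable {V : Type*} [NormedAddCommGroup V] [InnerProductSpace ℝ V]

lemma finrank_direction_affineSpan_lt [FiniteDimensional ℝ V] {K : Set V} {u : V} (hu : u ≠ 0)
    {c : ℝ} (hc : ∀ x ∈ K, ⟪u, x⟫_ℝ = c) :
    finrank ℝ (affineSpan ℝ K).direction < finrank ℝ V := by
  have hle : (affineSpan ℝ K).direction ≤ (ℝ ∙ u)ᗮ := by
    rw [direction_affineSpan, vectorSpan_def, Submodule.span_le]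
    rintro _ ⟨x, hx, y, hy, rfl⟩
    beta_reduce
    rw [SetLike.mem_coe, Submodule.mem_orthogonal_singleton_iff_inner_right, vsub_eq_sub,
      inner_sub_right, hc x hx, hc y hy, sub_self]
  have hsum := Submodule.finrank_add_finrank_orthogonal (ℝ ∙ u)
  rw [finrank_span_singleton hu] at hsum
  have := Submodule.finrank_mono hle
  lia

lemma IsInvariantSimpleValuation.sub_mul {σ τ : Set V → ℝ} (hσ : IsInvariantSimpleValuation σ)
    (hτ : IsInvariantSimpleValuation τ) (c : ℝ) :
    IsInvariantSimpleValuation fun K => σ K - c * τ K where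
  empty := by rw [hσ.empty, hτ.empty, mul_zero, sub_zero]
  union_add_inter K L hK hL hKL := by
    linear_combination hσ.union_add_inter K L hK hL hKL - c * hτ.union_add_inter K L hK hL hKL
  translate v K hK := by rw [hσ.translate v K hK, hτ.translate v K hK]
  reflect u K hK := by rw [hσ.reflect u K hK, hτ.reflect u K hK]
  flat u a K hK hu ha := by rw [hσ.flat u a K hK hu ha, hτ.flat u a K hK hu ha, mul_zero, sub_zero]
  continuousFromAbove K hK hanti :=
    (hσ.continuousFromAbove K hK hanti).sub ((hτ.continuousFromAbove K hK hanti).const_mul c)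

lemma IsInvariantSimpleValuation.image_linearIsometryEquiv [FiniteDimensional ℝ V]
    {σ : Set V → ℝ} (hσ : IsInvariantSimpleValuation σ) (T : V ≃ₗᵢ[ℝ] V) {K : Set V}
    (hK : IsCompactConvex K) : σ (T '' K) = σ K := by
  obtain ⟨l, -, rfl⟩ := T.reflections_generate_dim
  induction l with
  | nil => simp
  | cons u l ih =>
    let R := (l.map fun v => (ℝ ∙ v)ᗮ.reflection).prod
    rw [List.map_cons, List.prod_cons, LinearIsometryEquiv.coe_mul, image_comp]
    exact (hσ.reflect u _ (hK.image (R.toContinuousLinearEquiv : V →L[ℝ] V))).trans ih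

lemma IsInvariantSimpleValuation.parallelepiped_eq [FiniteDimensional ℝ V] {σ : Set V → ℝ}
    (hσ : IsInvariantSimpleValuation σ) {ι : Type*} [Fintype ι] (b b' : OrthonormalBasis ι ℝ V) :
    σ (parallelepiped b) = σ (parallelepiped b') := by
  let T := b.equiv b' (.refl ι)
  have himage : T '' parallelepiped b = parallelepiped b' := by
    refine (image_parallelepiped (T.toLinearEquiv : V →ₗ[ℝ] V) b).trans (congrArg _ ?_)
    exact funext fun i => b.equiv_apply_basis b' (.refl ι) i
  rw [← himage, hσ.image_linearIsometryEquiv T (isCompactConvex_parallelepiped b)]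

variable [FiniteDimensional ℝ V] [MeasurableSpace V] [BorelSpace V]

lemma isInvariantSimpleValuation_volume :
    IsInvariantSimpleValuation fun K : Set V => volume.real K where
  empty := measureReal_empty
  union_add_inter K L hK hL _ := measureReal_union_add_inter hL.1.measurableSet
    hK.1.measure_lt_top.ne hL.1.measure_lt_top.ne
  translate v K _ := by
    rw [measureReal_def, measureReal_def, singleton_add, image_add_left, measure_preimage_add]
  reflect u K _ := by
    have hpre : (ℝ ∙ u)ᗮ.reflection '' K = (ℝ ∙ u)ᗮ.reflection ⁻¹' K :=
      (ℝ ∙ u)ᗮ.reflection.toEquiv.image_eq_preimage_symm K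
    rw [hpre]
    exact congrArg ENNReal.toReal ((ℝ ∙ u)ᗮ.reflection.measurePreserving.measure_preimage_equiv
      (f := (ℝ ∙ u)ᗮ.reflection.toMeasurableEquiv) K)
  flat u c K _ hu hc := by
    have hne : affineSpan ℝ K ≠ ⊤ := by
      intro htop
      have := finrank_direction_affineSpan_lt hu hc
      rw [htop, AffineSubspace.direction_top, finrank_top] at this
      exact this.false
    rw [measureReal_def, measure_mono_null (subset_affineSpan ℝ K)
      (Measure.addHaar_affineSubspace volume _ hne), ENNReal.toReal_zero]
  continuousFromAbove K hK hanti := by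
    have hfin := (hK 0).1.measure_lt_top (μ := volume)
    refine (ENNReal.tendsto_toReal ((measure_mono (iInter_subset K 0)).trans_lt hfin).ne).comp ?_
    exact tendsto_measure_iInter_atTop (fun i => (hK i).1.measurableSet.nullMeasurableSet) hanti
      ⟨0, hfin.ne⟩

theorem IsInvariantSimpleValuation.exists_eq_mul_volume {σ : Set V → ℝ}
    (hσ : IsInvariantSimpleValuation σ) :
    ∃ c : ℝ, ∀ K, IsCompactConvex K → σ K = c * volume.real K := by
  let b := stdOrthonormalBasis ℝ V
  refine ⟨σ (parallelepiped b), fun K hK => sub_eq_zero.1 ?_⟩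
  refine unitCubesDetermine V _ (hσ.sub_mul isInvariantSimpleValuation_volume _) (fun v hv => ?_)
    K hK
  obtain ⟨b', rfl⟩ : ∃ b' : OrthonormalBasis (Fin (finrank ℝ V)) ℝ V, b' = v :=
    ⟨.mk hv (hv.linearIndependent.span_eq_top_of_card_eq_finrank' (Fintype.card_fin _)).ge, by simp⟩
  beta_reduce
  rw [hσ.parallelepiped_eq b b', measureReal_def, b'.volume_parallelepiped, ENNReal.toReal_one,
    mul_one, sub_self]

end Volume

section Hausdorff

lemma tendsto_hausdorffEDist_iInter {X : Type*} [EMetricSpace X] {K : ℕ → Set X}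
    (hK : ∀ i, IsCompact (K i)) (hanti : Antitone K) :
    Tendsto (fun i => Metric.hausdorffEDist (K i) (⋂ i, K i)) atTop (𝓝 0) := by
  refine ENNReal.tendsto_nhds_zero.2 fun ε hε => ?_
  obtain ⟨n, hn⟩ := exists_subset_nhds_of_isCompact hanti.directed_ge hK
    (U := {x | Metric.infEDist x (⋂ i, K i) < ε}) fun x hx =>
      (isOpen_lt Metric.continuous_infEDist continuous_const).mem_nhds
        (by simpa only [mem_ofPred_eq, Metric.infEDist_zero_of_mem hx] using hε)
  filter_upwards [eventually_ge_atTop n] with i hi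
  refine Metric.hausdorffEDist_le_of_infEDist (fun x hx => (hn (hanti hi hx)).le) fun x hx => ?_
  rw [Metric.infEDist_zero_of_mem (iInter_subset K i hx)]
  exact zero_le

lemma isContinuousFromAbove_of_hausdorff {V : Type*} [NormedAddCommGroup V] [InnerProductSpace ℝ V]
    {σ : Set V → ℝ}
    (hcont : ∀ (Ki : ℕ → Set V) (K : Set V), (∀ i, (Ki i).Nonempty ∧ IsCompactConvex (Ki i)) →
      K.Nonempty ∧ IsCompactConvex K → Antitone Ki →
      Tendsto (fun i => Metric.hausdorffEDist (Ki i) K) atTop (𝓝 0) →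
      Tendsto (fun i => σ (Ki i)) atTop (𝓝 (σ K))) : IsContinuousFromAbove σ := by
  intro K hK hanti
  by_cases hne : ∀ i, (K i).Nonempty
  · refine hcont K _ (fun i => ⟨hne i, hK i⟩) ⟨?_, ?_, convex_iInter fun i => (hK i).2⟩ hanti
      (tendsto_hausdorffEDist_iInter (fun i => (hK i).1) hanti)
    · exact IsCompact.nonempty_iInter_of_sequence_nonempty_isCompact_isClosed K
        (fun i => hanti i.le_succ) hne (hK 0).1 fun i => (hK i).1.isClosed
    · exact (hK 0).1.of_isClosed_subset (isClosed_iInter fun i => (hK i).1.isClosed)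
        (iInter_subset K 0)
  · obtain ⟨n, hn⟩ := not_forall.1 hne
    rw [not_nonempty_iff_eq_empty] at hn
    have hinter : ⋂ i, K i = ∅ := subset_empty_iff.1 (hn ▸ iInter_subset K n)
    refine tendsto_const_nhds.congr' ?_
    filter_upwards [eventually_ge_atTop n] with i hi
    have hi : K i = ∅ := subset_empty_iff.1 (hn ▸ hanti hi)
    rw [hinter, hi]

end Hausdorff

end SimpleValuation

open SimpleValuation in
theorem volume_theorem_general {V : Type*} [NormedAddCommGroup V] [InnerProductSpace ℝ V]
    [FiniteDimensional ℝ V] [MeasurableSpace V] [BorelSpace V] (σ : Set V → ℝ) (hempty : σ ∅ = 0)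
    (hval : ∀ K L : Set V, K.Nonempty ∧ IsCompactConvex K → L.Nonempty ∧ IsCompactConvex L →
      (K ∪ L).Nonempty ∧ IsCompactConvex (K ∪ L) → σ (K ∪ L) + σ (K ∩ L) = σ K + σ L)
    (hinv : ∀ (T : V ≃ᵢ V) (K : Set V), K.Nonempty ∧ IsCompactConvex K → σ (T '' K) = σ K)
    (hsimple : ∀ K : Set V, K.Nonempty ∧ IsCompactConvex K →
      Module.finrank ℝ (affineSpan ℝ K).direction < Module.finrank ℝ V → σ K = 0)
    (hcont : ∀ (Ki : ℕ → Set V) (K : Set V), (∀ i, (Ki i).Nonempty ∧ IsCompactConvex (Ki i)) →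
      K.Nonempty ∧ IsCompactConvex K → Antitone Ki →
      Tendsto (fun i => Metric.hausdorffEDist (Ki i) K) atTop (𝓝 0) →
      Tendsto (fun i => σ (Ki i)) atTop (𝓝 (σ K))) :
    ∃ c : ℝ, ∀ K : Set V, K.Nonempty ∧ IsCompactConvex K → σ K = c * (volume K).toReal := by
  have hσ : IsInvariantSimpleValuation σ :=
    { empty := hempty
      union_add_inter := fun K L hK hL hKL => by
        rcases K.eq_empty_or_nonempty with rfl | hK0
        · simp [hempty]
        rcases L.eq_empty_or_nonempty with rfl | hL0
        · simp [hempty]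
        exact hval K L ⟨hK0, hK⟩ ⟨hL0, hL⟩ ⟨hK0.mono Set.subset_union_left, hK.1.union hL.1, hKL⟩
      translate := fun v K hK => by
        rcases K.eq_empty_or_nonempty with rfl | hK0
        · rw [Set.add_empty]
        rw [Set.singleton_add]
        exact hinv (IsometryEquiv.addLeft v) K ⟨hK0, hK⟩
      reflect := fun u K hK => by
        rcases K.eq_empty_or_nonempty with rfl | hK0
        · rw [Set.image_empty]
        exact hinv (Submodule.reflection _).toIsometryEquiv K ⟨hK0, hK⟩
      flat := fun u c K hK hu hc => by
        rcases K.eq_empty_or_nonempty with rfl | hK0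
        · exact hempty
        exact hsimple K ⟨hK0, hK⟩ (finrank_direction_affineSpan_lt hu hc)
      continuousFromAbove := isContinuousFromAbove_of_hausdorff hcont }
  obtain ⟨c, hc⟩ := hσ.exists_eq_mul_volume
  exact ⟨c, fun K hK => hc K hK.2⟩

/-- Volume theorem: a rigid motion invariant, simple valuation on convex bodies of `ℝ^N`
(vanishing on the empty set), continuous along decreasing sequences converging in the
Hausdorff metric, is a constant multiple of the `N`-dimensional volume. -/
theorem volume_theorem {N : ℕ}
    (σ : Set (EuclideanSpace ℝ (Fin N)) → ℝ)
    (hempty : σ ∅ = 0)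
    (hval : ∀ K L : Set (EuclideanSpace ℝ (Fin N)),
      IsConvexBody K → IsConvexBody L → IsConvexBody (K ∪ L) →
      σ (K ∪ L) + σ (K ∩ L) = σ K + σ L)
    (hinv : ∀ (T : EuclideanSpace ℝ (Fin N) ≃ᵢ EuclideanSpace ℝ (Fin N))
      (K : Set (EuclideanSpace ℝ (Fin N))), IsConvexBody K → σ (T '' K) = σ K)
    (hsimple : ∀ K : Set (EuclideanSpace ℝ (Fin N)), IsConvexBody K →
      Module.finrank ℝ (affineSpan ℝ K).direction < N → σ K = 0)
    (hcont : ∀ (Ki : ℕ → Set (EuclideanSpace ℝ (Fin N)))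
      (K : Set (EuclideanSpace ℝ (Fin N))),
      (∀ i, IsConvexBody (Ki i)) → IsConvexBody K → Antitone Ki →
      Tendsto (fun i => EMetric.hausdorffEdist (Ki i) K) atTop (𝓝 0) →
      Tendsto (fun i => σ (Ki i)) atTop (𝓝 (σ K))) :
    ∃ c : ℝ, ∀ K : Set (EuclideanSpace ℝ (Fin N)), IsConvexBody K →
      σ K = c * (volume K).toReal := by
  exact volume_theorem_general σ hempty hval hinv
    (fun K hK hdim => hsimple K hK (hdim.trans_eq finrank_euclideanSpace_fin)) hcont

end
end

section
/- Let φ : [0,∞) → ℝ be continuous and such that φ ≡ 0 on [0,δ] for some δ > 0. Then for every f ∈ C^N the function x ↦ φ(f(x)) is Lebesgue integrable on ℝ^N, and the map μ : C^N → ℝ defined by μ(f) = ∫_{ℝ^N} φ(f(x)) dx is an invariant, continuous and simple valuation on C^N. -/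
open Filter Topology MeasureTheory

noncomputable section

/-- A function `f : ℝ^N → ℝ` is quasi-concave if it is nonnegative and all its
superlevel sets `{x | t ≤ f x}` for `t > 0` are empty or compact and convex. -/
def QuasiConcave {N : ℕ} (f : EuclideanSpace ℝ (Fin N) → ℝ) : Prop :=
  (∀ x, 0 ≤ f x) ∧
  ∀ t : ℝ, 0 < t →
    {x | t ≤ f x} = ∅ ∨ (IsCompact {x | t ≤ f x} ∧ Convex ℝ {x | t ≤ f x})

/-- `μ` is a valuation on `C^N`: it vanishes on the zero function and satisfies
the inclusion-exclusion property with respect to pointwise max and min. -/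
def IsValuation {N : ℕ} (μ : (EuclideanSpace ℝ (Fin N) → ℝ) → ℝ) : Prop :=
  μ (fun _ => 0) = 0 ∧
  ∀ f g : EuclideanSpace ℝ (Fin N) → ℝ,
    QuasiConcave f → QuasiConcave g →
    QuasiConcave (fun x => max (f x) (g x)) →
    μ (fun x => max (f x) (g x)) + μ (fun x => min (f x) (g x)) = μ f + μ g

/-- `μ` is invariant under rigid motions (isometries) of `ℝ^N`. -/
def IsInvariantVal {N : ℕ} (μ : (EuclideanSpace ℝ (Fin N) → ℝ) → ℝ) : Prop :=
  ∀ (T : EuclideanSpace ℝ (Fin N) ≃ᵢ EuclideanSpace ℝ (Fin N))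
    (f : EuclideanSpace ℝ (Fin N) → ℝ), QuasiConcave f →
    μ (fun x => f (T x)) = μ f

/-- `μ` is continuous: it preserves limits of monotone pointwise convergent
sequences of quasi-concave functions. -/
def IsContinuousVal {N : ℕ} (μ : (EuclideanSpace ℝ (Fin N) → ℝ) → ℝ) : Prop :=
  ∀ (fi : ℕ → EuclideanSpace ℝ (Fin N) → ℝ) (f : EuclideanSpace ℝ (Fin N) → ℝ),
    (∀ i, QuasiConcave (fi i)) → QuasiConcave f →
    (Monotone fi ∨ Antitone fi) →
    (∀ x, Tendsto (fun i => fi i x) atTop (𝓝 (f x))) →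
    Tendsto (fun i => μ (fi i)) atTop (𝓝 (μ f))

/-- `μ` is simple: it vanishes on quasi-concave functions which are zero a.e. -/
def IsSimpleVal {N : ℕ} (μ : (EuclideanSpace ℝ (Fin N) → ℝ) → ℝ) : Prop :=
  ∀ f : EuclideanSpace ℝ (Fin N) → ℝ, QuasiConcave f →
    (∀ᵐ x : EuclideanSpace ℝ (Fin N), f x = 0) → μ f = 0

/-- `μ` is monotone increasing: `f ≤ g` pointwise implies `μ f ≤ μ g`. -/
def IsMonotoneVal {N : ℕ} (μ : (EuclideanSpace ℝ (Fin N) → ℝ) → ℝ) : Prop :=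
  ∀ f g : EuclideanSpace ℝ (Fin N) → ℝ, QuasiConcave f → QuasiConcave g →
    (∀ x, f x ≤ g x) → μ f ≤ μ g

/-!
If `g` is quasi-concave, then `{x | δ ≤ g x}` is compact and `g`, being upper semicontinuous, is
bounded by some `M`. With `C` a bound for `‖φ‖` on `[0, M]`, the single integrable function
`C · 1_{δ ≤ g}` dominates `φ ∘ h` for every `0 ≤ h ≤ g`. This gives integrability, and continuity by
dominated convergence: a monotone sequence lies below its limit or below its first term. The
valuation identity already holds pointwise, since `{max a b, min a b} = {a, b}` as multisets.
-/

/-- Nonnegative functions all of whose superlevel sets at positive heights are compact. This is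
quasi-concavity without convexity, on an arbitrary topological space. -/
structure HasCompactSuperlevels {X : Type*} [TopologicalSpace X] (f : X → ℝ) : Prop where
  nonneg : ∀ x, 0 ≤ f x
  isCompact_superlevel : ∀ t, 0 < t → IsCompact {x | t ≤ f x}

theorem QuasiConcave.hasCompactSuperlevels {N : ℕ} {f : EuclideanSpace ℝ (Fin N) → ℝ}
    (hf : QuasiConcave f) : HasCompactSuperlevels f where
  nonneg := hf.1
  isCompact_superlevel t ht :=
    (hf.2 t ht).elim (fun hempty => hempty ▸ isCompact_empty) fun h => h.1

namespace HasCompactSuperlevels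

section Topology

variable {X : Type*} [TopologicalSpace X] {f g : X → ℝ}

theorem sup (hf : HasCompactSuperlevels f) (hg : HasCompactSuperlevels g) :
    HasCompactSuperlevels (f ⊔ g) where
  nonneg x := le_sup_of_le_left (hf.nonneg x)
  isCompact_superlevel t ht := by
    simpa only [Pi.sup_apply, le_sup_iff, Set.ofPred_or] using
      (hf.isCompact_superlevel t ht).union (hg.isCompact_superlevel t ht)

variable [T2Space X]

theorem upperSemicontinuous (hf : HasCompactSuperlevels f) : UpperSemicontinuous f := by
  refine upperSemicontinuous_iff_isClosed_preimage.2 fun t => ?_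
  rcases lt_or_ge 0 t with ht | ht
  · exact (hf.isCompact_superlevel t ht).isClosed
  · have huniv : f ⁻¹' Set.Ici t = Set.univ :=
      Set.eq_univ_of_forall fun x => ht.trans (hf.nonneg x)
    exact huniv ▸ isClosed_univ

theorem bddAbove_range (hf : HasCompactSuperlevels f) : BddAbove (Set.range f) := by
  obtain ⟨M, hM⟩ := (hf.upperSemicontinuous.upperSemicontinuousOn _).bddAbove_of_isCompact
    (hf.isCompact_superlevel 1 one_pos)
  refine ⟨max 1 M, Set.forall_mem_range.2 fun x => ?_⟩
  rcases le_total 1 (f x) with hx | hx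
  · exact le_max_of_le_right (hM (Set.mem_image_of_mem f hx))
  · exact le_max_of_le_left hx

theorem inf (hf : HasCompactSuperlevels f) (hg : HasCompactSuperlevels g) :
    HasCompactSuperlevels (f ⊓ g) where
  nonneg x := le_inf (hf.nonneg x) (hg.nonneg x)
  isCompact_superlevel t ht := by
    simpa only [Pi.inf_apply, le_inf_iff, Set.ofPred_and] using
      (hf.isCompact_superlevel t ht).inter (hg.isCompact_superlevel t ht)

end Topology

section Integral

variable {X E : Type*} [TopologicalSpace X] [T2Space X] [MeasurableSpace X]
  [OpensMeasurableSpace X] {ν : Measure X} [NormedAddCommGroup E] {φ : ℝ → E} {δ : ℝ} {f g : X → ℝ}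

theorem stronglyMeasurable_comp (hf : HasCompactSuperlevels f)
    (hφc : ContinuousOn φ (Set.Ici 0)) : StronglyMeasurable fun x => φ (f x) :=
  hφc.domRestrict.comp_stronglyMeasurable
    (hf.upperSemicontinuous.measurable.subtype_mk (h := hf.nonneg)).stronglyMeasurable

theorem exists_integrable_bound [IsFiniteMeasureOnCompacts ν] (hg : HasCompactSuperlevels g)
    (hδ : 0 < δ) (hφc : ContinuousOn φ (Set.Ici 0)) (hφ0 : ∀ t ∈ Set.Icc 0 δ, φ t = 0) :
    ∃ B : X → ℝ, Integrable B ν ∧ ∀ x, ∀ t ∈ Set.Icc 0 (g x), ‖φ t‖ ≤ B x := by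
  obtain ⟨M, hM⟩ := hg.bddAbove_range
  obtain ⟨C, hC⟩ := isCompact_Icc.exists_bound_of_continuousOn
    (hφc.mono (Set.Icc_subset_Ici_self : Set.Icc 0 M ⊆ Set.Ici 0))
  have hK : IsCompact {x | δ ≤ g x} := hg.isCompact_superlevel δ hδ
  refine ⟨{x | δ ≤ g x}.indicator fun _ => C, ?_, fun x t ht => ?_⟩
  · exact (integrable_indicator_iff hK.measurableSet).2 (integrableOn_const hK.measure_lt_top.ne)
  · by_cases hx : x ∈ {x | δ ≤ g x}
    · rw [Set.indicator_of_mem hx]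
      exact hC t ⟨ht.1, ht.2.trans (hM (Set.mem_range_self x))⟩
    · rw [Set.indicator_of_notMem hx, hφ0 t ⟨ht.1, ht.2.trans (lt_of_not_ge hx).le⟩,
        norm_zero]

theorem integrable_comp [IsFiniteMeasureOnCompacts ν] (hf : HasCompactSuperlevels f) (hδ : 0 < δ)
    (hφc : ContinuousOn φ (Set.Ici 0)) (hφ0 : ∀ t ∈ Set.Icc 0 δ, φ t = 0) :
    Integrable (fun x => φ (f x)) ν := by
  obtain ⟨B, hB, hφB⟩ := hf.exists_integrable_bound (ν := ν) hδ hφc hφ0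
  exact hB.mono' (hf.stronglyMeasurable_comp hφc).aestronglyMeasurable
    (Eventually.of_forall fun x => hφB x _ ⟨hf.nonneg x, le_rfl⟩)

variable [NormedSpace ℝ E]

theorem integral_comp_max_add_integral_comp_min [IsFiniteMeasureOnCompacts ν]
    (hf : HasCompactSuperlevels f) (hg : HasCompactSuperlevels g) (hδ : 0 < δ)
    (hφc : ContinuousOn φ (Set.Ici 0)) (hφ0 : ∀ t ∈ Set.Icc 0 δ, φ t = 0) :
    ∫ x, φ (max (f x) (g x)) ∂ν + ∫ x, φ (min (f x) (g x)) ∂ν =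
      ∫ x, φ (f x) ∂ν + ∫ x, φ (g x) ∂ν :=
  calc
    _ = ∫ x, φ (max (f x) (g x)) + φ (min (f x) (g x)) ∂ν :=
      (integral_add ((hf.sup hg).integrable_comp hδ hφc hφ0)
        ((hf.inf hg).integrable_comp hδ hφc hφ0)).symm
    _ = ∫ x, φ (f x) + φ (g x) ∂ν := by simp only [fn_max_add_fn_min φ]
    _ = _ := integral_add (hf.integrable_comp hδ hφc hφ0) (hg.integrable_comp hδ hφc hφ0)

theorem integral_comp_measurePreserving {Y : Type*} [MeasurableSpace Y] {ν' : Measure Y}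
    {T : Y → X} (hf : HasCompactSuperlevels f) (hφc : ContinuousOn φ (Set.Ici 0))
    (hT : MeasurePreserving T ν' ν) : ∫ y, φ (f (T y)) ∂ν' = ∫ x, φ (f x) ∂ν := by
  rw [← hT.map_eq, integral_map hT.aemeasurable
    (hf.stronglyMeasurable_comp hφc).aestronglyMeasurable]

theorem tendsto_integral_comp_of_le [IsFiniteMeasureOnCompacts ν] {ι : Type*} {l : Filter ι}
    [l.NeBot] [l.IsCountablyGenerated] {F : ι → X → ℝ} (hF : ∀ i, HasCompactSuperlevels (F i))
    (hg : HasCompactSuperlevels g) (hFg : ∀ i x, F i x ≤ g x)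
    (hlim : ∀ x, Tendsto (fun i => F i x) l (𝓝 (f x))) (hδ : 0 < δ)
    (hφc : ContinuousOn φ (Set.Ici 0)) (hφ0 : ∀ t ∈ Set.Icc 0 δ, φ t = 0) :
    Tendsto (fun i => ∫ x, φ (F i x) ∂ν) l (𝓝 (∫ x, φ (f x) ∂ν)) := by
  obtain ⟨B, hB, hφB⟩ := hg.exists_integrable_bound (ν := ν) hδ hφc hφ0
  refine tendsto_integral_filter_of_dominated_convergence B
    (Eventually.of_forall fun i => ((hF i).stronglyMeasurable_comp hφc).aestronglyMeasurable)
    (Eventually.of_forall fun i => Eventually.of_forall fun x =>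
      hφB x _ ⟨(hF i).nonneg x, hFg i x⟩) hB
    (Eventually.of_forall fun x => ?_)
  have hfx : 0 ≤ f x := ge_of_tendsto' (hlim x) fun i => (hF i).nonneg x
  exact (hφc (f x) hfx).tendsto.comp
    (tendsto_nhdsWithin_iff.2 ⟨hlim x, Eventually.of_forall fun i => (hF i).nonneg x⟩)

theorem tendsto_integral_comp_of_monotone_or_antitone [IsFiniteMeasureOnCompacts ν]
    {F : ℕ → X → ℝ} (hF : ∀ i, HasCompactSuperlevels (F i)) (hf : HasCompactSuperlevels f)
    (hmono : Monotone F ∨ Antitone F) (hlim : ∀ x, Tendsto (fun i => F i x) atTop (𝓝 (f x)))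
    (hδ : 0 < δ) (hφc : ContinuousOn φ (Set.Ici 0)) (hφ0 : ∀ t ∈ Set.Icc 0 δ, φ t = 0) :
    Tendsto (fun i => ∫ x, φ (F i x) ∂ν) atTop (𝓝 (∫ x, φ (f x) ∂ν)) := by
  obtain ⟨g, hg, hFg⟩ : ∃ g, HasCompactSuperlevels g ∧ ∀ i x, F i x ≤ g x := by
    rcases hmono with hmono | hanti
    · exact ⟨f, hf, hmono.ge_of_tendsto (tendsto_pi_nhds.2 hlim)⟩
    · exact ⟨F 0, hF 0, fun i => hanti (Nat.zero_le i)⟩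
  exact tendsto_integral_comp_of_le hF hg hFg hlim hδ hφc hφ0

end Integral

end HasCompactSuperlevels

theorem integral_comp_eq_zero_of_ae_eq_zero {X E : Type*} [MeasurableSpace X] {ν : Measure X}
    [NormedAddCommGroup E] [NormedSpace ℝ E] {α : Type*} [Zero α] {φ : α → E} {f : X → α}
    (hφ : φ 0 = 0) (hf : ∀ᵐ x ∂ν, f x = 0) : ∫ x, φ (f x) ∂ν = 0 :=
  integral_eq_zero_of_ae (hf.mono fun x hx => by simp only [hx, hφ, Pi.zero_apply])

theorem measurePreserving_volume_of_isometryEquiv {V W : Type*}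
    [NormedAddCommGroup V] [InnerProductSpace ℝ V] [FiniteDimensional ℝ V] [MeasurableSpace V]
    [BorelSpace V] [NormedAddCommGroup W] [InnerProductSpace ℝ W] [FiniteDimensional ℝ W]
    [MeasurableSpace W] [BorelSpace W] (T : V ≃ᵢ W) : MeasurePreserving T := by
  have hdim : Module.finrank ℝ V = Module.finrank ℝ W :=
    T.toRealLinearIsometryEquiv.toLinearEquiv.finrank_eq
  have hT := T.measurePreserving_euclideanHausdorffMeasure (Module.finrank ℝ V)
  rwa [InnerProductSpace.euclideanHausdorffMeasure_eq_volume, hdim,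
    InnerProductSpace.euclideanHausdorffMeasure_eq_volume] at hT

theorem integral_simple_valuation_general {X E : Type*} [TopologicalSpace X] [T2Space X]
    [MeasurableSpace X] [OpensMeasurableSpace X] (ν : Measure X) [IsFiniteMeasureOnCompacts ν]
    [NormedAddCommGroup E] [NormedSpace ℝ E] {φ : ℝ → E} {δ : ℝ} (hδ : 0 < δ)
    (hφc : ContinuousOn φ (Set.Ici 0)) (hφ0 : ∀ t ∈ Set.Icc 0 δ, φ t = 0) :
    (∀ f : X → ℝ, HasCompactSuperlevels f → Integrable (fun x => φ (f x)) ν) ∧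
    (∀ f g : X → ℝ, HasCompactSuperlevels f → HasCompactSuperlevels g →
      ∫ x, φ (max (f x) (g x)) ∂ν + ∫ x, φ (min (f x) (g x)) ∂ν =
        ∫ x, φ (f x) ∂ν + ∫ x, φ (g x) ∂ν) ∧
    (∀ (T : X → X) (f : X → ℝ), MeasurePreserving T ν ν → HasCompactSuperlevels f →
      ∫ x, φ (f (T x)) ∂ν = ∫ x, φ (f x) ∂ν) ∧
    (∀ (F : ℕ → X → ℝ) (f : X → ℝ), (∀ i, HasCompactSuperlevels (F i)) →
      HasCompactSuperlevels f → (Monotone F ∨ Antitone F) →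
      (∀ x, Tendsto (fun i => F i x) atTop (𝓝 (f x))) →
      Tendsto (fun i => ∫ x, φ (F i x) ∂ν) atTop (𝓝 (∫ x, φ (f x) ∂ν))) ∧
    (∀ f : X → ℝ, (∀ᵐ x ∂ν, f x = 0) → ∫ x, φ (f x) ∂ν = 0) :=
  ⟨fun _ hf => hf.integrable_comp hδ hφc hφ0,
    fun _ _ hf hg => hf.integral_comp_max_add_integral_comp_min hg hδ hφc hφ0,
    fun _ _ hT hf => hf.integral_comp_measurePreserving hφc hT,
    fun _ _ hF hf hmono hlim =>
      HasCompactSuperlevels.tendsto_integral_comp_of_monotone_or_antitone hF hf hmono hlim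
        hδ hφc hφ0,
    fun _ hf => integral_comp_eq_zero_of_ae_eq_zero (hφ0 0 (Set.left_mem_Icc.2 hδ.le)) hf⟩

/-- If `φ : [0,∞) → ℝ` is continuous and vanishes on `[0,δ]` for some `δ > 0`, then
`x ↦ φ(f(x))` is Lebesgue integrable for every quasi-concave `f`, and
`f ↦ ∫ φ(f(x)) dx` is an invariant, continuous and simple valuation on `C^N`. -/
theorem integral_simple_valuation {N : ℕ} (φ : ℝ → ℝ) (δ : ℝ) (hδ : 0 < δ)
    (hφc : ContinuousOn φ (Set.Ici 0))
    (hφ0 : ∀ t ∈ Set.Icc (0:ℝ) δ, φ t = 0) :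
    (∀ f : EuclideanSpace ℝ (Fin N) → ℝ, QuasiConcave f →
      Integrable (fun x => φ (f x))) ∧
    IsValuation (N := N) (fun f => ∫ x, φ (f x)) ∧
    IsInvariantVal (N := N) (fun f => ∫ x, φ (f x)) ∧
    IsContinuousVal (N := N) (fun f => ∫ x, φ (f x)) ∧
    IsSimpleVal (N := N) (fun f => ∫ x, φ (f x)) := by
  obtain ⟨hintegrable, hval, hinv, hcont, hsimple⟩ := integral_simple_valuation_general
    (volume : Measure (EuclideanSpace ℝ (Fin N))) hδ hφc hφ0
  exact ⟨fun f hf => hintegrable f hf.hasCompactSuperlevels,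
    ⟨hsimple _ (Eventually.of_forall fun _ => rfl),
      fun f g hf hg _ => hval f g hf.hasCompactSuperlevels hg.hasCompactSuperlevels⟩,
    fun T f hf => hinv T f (measurePreserving_volume_of_isometryEquiv T) hf.hasCompactSuperlevels,
    fun F f hF hf => hcont F f (fun i => (hF i).hasCompactSuperlevels) hf.hasCompactSuperlevels,
    fun f _ hf0 => hsimple f hf0⟩

end
end
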